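/- arXiv:1011.0975 — 2 statements merged into one kernel-verified Lean document; each statement's English description precedes it below -/
import Mathlib

section
/- Let F be a finite hyperforest (a hypergraph whose distinct hyperedges intersect in at most one vertex and with every cycle contained in a hyperedge). In the poset of hyperforests on a fixed labelled vertex set, ordered by F' ≤ F if every hyperedge of F' is contained in some hyperedge of F, the Möbius function value μ(minimal element, F) equals Π_{j≥2} (-(j-2)!)^{κ_j}, where κ_j is the number of hyperedges of F with exactly j vertices. -/
/-- A hyperforest on the vertex set `V`: a hypergraph whose hyperedges (of size at
least `2`) pairwise intersect in at most one vertex, and in which every cycle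
(a cyclic sequence of at least three distinct consecutively adjacent vertices)
is contained in a single hyperedge. -/
structure Hyperforest (V : Type*) [DecidableEq V] where
  edges : Finset (Finset V)
  two_le : ∀ e ∈ edges, 2 ≤ e.card
  inter : ∀ e ∈ edges, ∀ f ∈ edges, e ≠ f → (e ∩ f).card ≤ 1
  cycles : ∀ (k : ℕ) (v : Fin (k + 3) → V), Function.Injective v →
    (∀ j : Fin (k + 3), ∃ e ∈ edges, v j ∈ e ∧ v (j + 1) ∈ e) →
    ∃ e ∈ edges, ∀ j, v j ∈ e

/-- The order on hyperforests: `F' ≤ F` iff every hyperedge of `F'` is contained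
in some hyperedge of `F`. -/
def HFle {V : Type*} [DecidableEq V] (F' F : Hyperforest V) : Prop :=
  ∀ e' ∈ F'.edges, ∃ e ∈ F.edges, e' ⊆ e

section HFaux
open Finset

variable {V : Type*} [DecidableEq V]

def HConn (E : Finset (Finset V)) : V → V → Prop :=
  Relation.ReflTransGen (fun x y => ∃ e ∈ E, x ∈ e ∧ y ∈ e)

theorem HConn.refl {E : Finset (Finset V)} (x : V) : HConn E x x := Relation.ReflTransGen.refl

theorem HConn.trans {E : Finset (Finset V)} {x y z : V} (h : HConn E x y) (h' : HConn E y z) :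
    HConn E x z := Relation.ReflTransGen.trans h h'

theorem HConn.of_mem {E : Finset (Finset V)} {x y : V} {e : Finset V} (he : e ∈ E) (hx : x ∈ e)
    (hy : y ∈ e) : HConn E x y := Relation.ReflTransGen.single ⟨e, he, hx, hy⟩

theorem HConn.symm {E : Finset (Finset V)} {x y : V} (h : HConn E x y) : HConn E y x := by
  induction h with
  | refl => exact HConn.refl _
  | tail _ h2 ih =>
    obtain ⟨e, he, h3, h4⟩ := h2
    exact (HConn.of_mem he h4 h3).trans ih

theorem HConn.le {E E' : Finset (Finset V)} (H : ∀ e ∈ E, ∀ x ∈ e, ∀ y ∈ e, HConn E' x y) {x y : V}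
    (h : HConn E x y) : HConn E' x y := by
  induction h with
  | refl => exact HConn.refl _
  | tail _ h2 ih =>
    obtain ⟨e, he, h3, h4⟩ := h2
    exact ih.trans (H e he _ h3 _ h4)

theorem HConn.mono {E E' : Finset (Finset V)} (H : E ⊆ E') {x y : V}
    (h : HConn E x y) : HConn E' x y :=
  h.le fun _ he _ hx _ hy => HConn.of_mem (H he) hx hy

theorem HConn.insert_cases {E : Finset (Finset V)} {e : Finset V} {x y : V}
    (h : HConn (insert e E) x y) :
    HConn E x y ∨ ((∃ u ∈ e, HConn E x u) ∧ ∃ w ∈ e, HConn E w y) := by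
  induction h with
  | refl => exact Or.inl (HConn.refl _)
  | @tail y z _ h2 ih =>
    obtain ⟨g, hg, h3, h4⟩ := h2
    rcases Finset.mem_insert.1 hg with rfl | hg
    · right
      refine ⟨?_, z, h4, HConn.refl _⟩
      rcases ih with ih | ih
      · exact ⟨y, h3, ih⟩
      · exact ih.1
    · have := HConn.of_mem hg h3 h4
      rcases ih with ih | ⟨h5, w, hw, h6⟩
      · exact Or.inl (ih.trans this)
      · exact Or.inr ⟨h5, w, hw, h6.trans this⟩

theorem HConn.erase_cases {E : Finset (Finset V)} {e : Finset V} (he : e ∈ E) {x y : V}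
    (h : HConn E x y) :
    HConn (E.erase e) x y ∨ ((∃ u ∈ e, HConn (E.erase e) x u) ∧ ∃ w ∈ e, HConn (E.erase e) w y) := by
  apply HConn.insert_cases
  rwa [Finset.insert_erase he]

/-- a vertex outside all edges is isolated -/
theorem HConn.isolated {E : Finset (Finset V)} {a b : V} (ha : ∀ e ∈ E, a ∉ e) (h : HConn E a b) :
    a = b := by
  induction h with
  | refl => rfl
  | tail _ h2 ih =>
    obtain ⟨g, hg, h3, h4⟩ := h2
    subst ih
    exact absurd h3 (ha g hg)

theorem HConn.first_edge {E : Finset (Finset V)} {a b : V} (hab : a ≠ b) (h : HConn E a b) :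
    ∃ f ∈ E, a ∈ f ∧ ∃ v ∈ f, HConn (E.filter (fun e => a ∉ e)) v b := by
  have key : ∀ x, HConn E x b → (HConn (E.filter (fun e => a ∉ e)) x b ∨
      ∃ f ∈ E, a ∈ f ∧ ∃ v ∈ f, HConn (E.filter (fun e => a ∉ e)) v b) := by
    intro x hx
    induction hx using Relation.ReflTransGen.head_induction_on with
    | refl => exact Or.inl (HConn.refl _)
    | @head x y h2 _ ih =>
      obtain ⟨g, hg, h3, h4⟩ := h2
      rcases ih with ih | ih
      · by_cases hag : a ∈ g
        · exact Or.inr ⟨g, hg, hag, y, h4, ih⟩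
        · exact Or.inl ((HConn.of_mem (by simp [hg, hag]) h3 h4).trans ih)
      · exact Or.inr ih
  rcases key a h with h | h
  · exact absurd (HConn.isolated (by simp) h) hab
  · exact h

def HAcyc (E : Finset (Finset V)) : Prop :=
  ∀ e ∈ E, ∀ x ∈ e, ∀ y ∈ e, HConn (E.erase e) x y → x = y

theorem HAcyc.mono {E E' : Finset (Finset V)} (h : HAcyc E') (H : E ⊆ E') : HAcyc E :=
  fun e he x hx y hy hc => h e (H he) x hx y hy (hc.mono (Finset.erase_subset_erase _ H))

theorem HAcyc.eq_of_mem {E : Finset (Finset V)} (h : HAcyc E) {e f : Finset V} (he : e ∈ E)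
    (hf : f ∈ E) {x y : V} (hxy : x ≠ y) (hx : x ∈ e) (hy : y ∈ e) (hx' : x ∈ f) (hy' : y ∈ f) :
    e = f := by
  by_contra hne
  exact hxy (h e he x hx y hy (HConn.of_mem (by simp [hf, Ne.symm hne]) hx' hy'))

theorem HAcyc.eq_of_subset {E : Finset (Finset V)} (h : HAcyc E) {e f : Finset V} (he : e ∈ E)
    (hf : f ∈ E) (hc : 2 ≤ e.card) (hs : e ⊆ f) : e = f := by
  obtain ⟨x, hx, y, hy, hxy⟩ := Finset.one_lt_card.1 hc
  exact h.eq_of_mem he hf hxy hx hy (hs hx) (hs hy)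

theorem HAcyc.shrink {E : Finset (Finset V)} (h : HAcyc E) {f f' : Finset V} (hf : f ∈ E)
    (hs : f' ⊆ f) : HAcyc (insert f' (E.erase f)) := by
  intro g hg x hx y hy hc
  by_cases hgf : g = f'
  · subst hgf
    refine h f hf x (hs hx) y (hs hy) (hc.mono ?_)
    intro k hk
    simp only [mem_erase, mem_insert] at hk ⊢
    tauto
  · have hg' : g ∈ E.erase f := by simpa [hgf] using hg
    have hg2 := mem_erase.1 hg'
    refine h g hg2.2 x hx y hy (hc.le ?_)
    intro k hk u hu w hw
    simp only [mem_erase, mem_insert] at hk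
    rcases hk with ⟨h1, rfl | ⟨h2, h3⟩⟩
    · exact HConn.of_mem (e := f) (by simp [hf, Ne.symm hg2.1]) (hs hu) (hs hw)
    · exact HConn.of_mem (e := k) (by simp [h1, h3]) hu hw

theorem HAcyc.add {E : Finset (Finset V)} (h : HAcyc E) {a v : V} (hc : ¬ HConn E a v) :
    HAcyc (insert {a, v} E) := by
  intro g hg x hx y hy hxy
  by_cases hgf : g = {a, v}
  · have h1 : HConn E x y := hxy.mono (by
      intro k hk
      simp only [mem_erase, mem_insert] at hk
      rw [hgf] at hk
      tauto)
    rw [hgf] at hx hy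
    simp only [mem_insert, mem_singleton] at hx hy
    rcases hx with rfl | rfl <;> rcases hy with rfl | rfl
    · rfl
    · exact absurd h1 hc
    · exact absurd h1.symm hc
    · rfl
  · have hg' : g ∈ E := by simpa [hgf] using hg
    have h1 : HConn (insert {a, v} (E.erase g)) x y := hxy.mono (by
      intro k hk
      simp only [mem_erase, mem_insert] at hk ⊢
      tauto)
    have hm : ∀ {p q}, HConn (E.erase g) p q → HConn E p q := fun h => h.mono (erase_subset _ _)
    have hE : HConn E x y := HConn.of_mem hg' hx hy
    rcases h1.insert_cases with h1 | ⟨⟨u, hu, h2⟩, w, hw, h3⟩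
    · exact h g hg' x hx y hy h1
    · simp only [mem_insert, mem_singleton] at hu hw
      rcases hu with rfl | rfl <;> rcases hw with rfl | rfl
      · exact h g hg' x hx y hy (h2.trans h3)
      · exact absurd (((hm h2).symm.trans hE).trans (hm h3).symm) hc
      · exact absurd (((hm h3).trans hE.symm).trans (hm h2)) hc
      · exact h g hg' x hx y hy (h2.trans h3)

theorem HAcyc.enlarge {E : Finset (Finset V)} (h : HAcyc E) {a : V} {e : Finset V} (he : e ∈ E)
    (hc : ∀ v ∈ e, ¬ HConn E a v) : HAcyc (insert (insert a e) (E.erase e)) := by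
  intro g hg x hx y hy hxy
  by_cases hgf : g = insert a e
  · have h1 : HConn (E.erase e) x y := hxy.mono (by
      intro k hk
      simp only [mem_erase, mem_insert] at hk ⊢
      rw [hgf] at hk
      tauto)
    have h2 : HConn E x y := h1.mono (erase_subset _ _)
    rw [hgf] at hx hy
    simp only [mem_insert] at hx hy
    rcases hx with rfl | hx <;> rcases hy with rfl | hy
    · rfl
    · exact absurd h2 (hc _ hy)
    · exact absurd h2.symm (hc _ hx)
    · exact h e he x hx y hy h1
  · have hg' : g ∈ E.erase e := by simpa [hgf] using hg
    have hg2 := mem_erase.1 hg'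
    have h1 : HConn (insert (insert a e) ((E.erase e).erase g)) x y := hxy.mono (by
      intro k hk
      simp only [mem_erase, mem_insert] at hk ⊢
      tauto)
    have hm' : ∀ {p q}, HConn ((E.erase e).erase g) p q → HConn (E.erase g) p q :=
      fun h => h.mono (erase_subset_erase _ (erase_subset _ _))
    have hm : ∀ {p q}, HConn (E.erase g) p q → HConn E p q := fun h => h.mono (erase_subset _ _)
    have hE : HConn E x y := HConn.of_mem hg2.2 hx hy
    apply h g hg2.2 x hx y hy
    rcases h1.insert_cases with h1 | ⟨⟨u, hu, h2⟩, w, hw, h3⟩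
    · exact hm' h1
    · simp only [mem_insert] at hu hw
      rcases hu with rfl | hu <;> rcases hw with rfl | hw
      · exact hm' (h2.trans h3)
      · exact absurd (((hm (hm' h2)).symm.trans hE).trans (hm (hm' h3)).symm) (hc _ hw)
      · exact absurd (((hm (hm' h3)).trans hE.symm).trans (hm (hm' h2))) (hc _ hu)
      · exact ((hm' h2).trans (HConn.of_mem (by simp [he, Ne.symm hg2.1]) hu hw)).trans (hm' h3)

/-- localization of connectivity inside an edge of `F` -/
theorem HAcyc.local_conn {F H : Finset (Finset V)} (hF : HAcyc F)
    (hle : ∀ e' ∈ H, ∃ e ∈ F, e' ⊆ e) {e0 : Finset V} (he0 : e0 ∈ F) {x y : V} (hx : x ∈ e0)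
    (hy : y ∈ e0) (hc : HConn H x y) : HConn (H.filter (fun e => e ⊆ e0)) x y := by
  have key : ∃ x' ∈ e0, HConn (F.erase e0) x' y ∧ HConn (H.filter (fun e => e ⊆ e0)) x x' := by
    clear hy
    induction hc with
    | refl => exact ⟨x, hx, HConn.refl _, HConn.refl _⟩
    | @tail y z _ h2 ih =>
      obtain ⟨g, hg, h3, h4⟩ := h2
      obtain ⟨x', hx', h5, h6⟩ := ih
      by_cases hge : g ⊆ e0
      · have : x' = y := hF e0 he0 _ hx' _ (hge h3) h5
        subst this
        exact ⟨z, hge h4, HConn.refl _, h6.trans (HConn.of_mem (by simp [hg, hge]) h3 h4)⟩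
      · obtain ⟨f, hf, hgf⟩ := hle g hg
        refine ⟨x', hx', h5.trans (HConn.of_mem (e := f) ?_ (hgf h3) (hgf h4)), h6⟩
        simp only [mem_erase, hf, and_true]
        rintro rfl
        exact hge hgf
  obtain ⟨x', hx', h5, h6⟩ := key
  have := hF e0 he0 _ hx' _ hy h5
  subst this
  exact h6

section comp
variable [Fintype V]
open Classical in
noncomputable def hcomp (E : Finset (Finset V)) (b : V) : Finset V :=
  univ.filter fun v => HConn E v b

theorem mem_hcomp {E : Finset (Finset V)} {b v : V} : v ∈ hcomp E b ↔ HConn E v b := by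
  simp [hcomp]

theorem HAcyc.count {E : Finset (Finset V)} (h : HAcyc E) (hne : ∀ e ∈ E, e.Nonempty) (b : V) :
    ∑ e ∈ E.filter (fun e => e ⊆ hcomp E b), ((e.card : ℤ) - 1) = (hcomp E b).card - 1 := by
  induction E using Finset.induction_on generalizing b with
  | empty =>
    have : hcomp (∅ : Finset (Finset V)) b = {b} := by
      ext v
      rw [mem_hcomp, mem_singleton]
      exact ⟨fun h => HConn.isolated (by simp) h, fun h => h ▸ HConn.refl _⟩
    simp [this]
  | @insert e E heE ih =>
    have hA : HAcyc E := h.mono (subset_insert _ _)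
    have ih := ih hA (fun e he => hne e (mem_insert_of_mem he))
    have hen := hne e (mem_insert_self _ _)
    have hsep : ∀ x ∈ e, ∀ y ∈ e, HConn E x y → x = y := by
      have := h e (mem_insert_self _ _)
      rwa [erase_insert heE] at this
    by_cases hb : ∃ t ∈ e, HConn E t b
    · obtain ⟨t, ht, htb⟩ := hb
      have hcomp' : hcomp (insert e E) b = e.biUnion (hcomp E) := by
        ext v
        simp only [mem_hcomp, mem_biUnion]
        constructor
        · intro hv
          rcases hv.insert_cases with hv | ⟨hv, _⟩
          · exact ⟨t, ht, hv.trans htb.symm⟩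
          · exact hv
        · rintro ⟨x, hx, hv⟩
          exact ((hv.mono (subset_insert _ _)).trans
            (HConn.of_mem (mem_insert_self _ _) hx ht)).trans (htb.mono (subset_insert _ _))
      have hfil : (insert e E).filter (fun g => g ⊆ hcomp (insert e E) b) =
          insert e (e.biUnion fun x => E.filter (fun g => g ⊆ hcomp E x)) := by
        rw [hcomp']
        ext g
        simp only [mem_filter, mem_insert, mem_biUnion]
        constructor
        · rintro ⟨rfl | hg, h1⟩
          · exact Or.inl rfl
          · right
            obtain ⟨y, hy⟩ := hne g (mem_insert_of_mem hg)
            obtain ⟨x, hx, h2⟩ := mem_biUnion.1 (h1 hy)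
            refine ⟨x, hx, hg, fun z hz => ?_⟩
            rw [mem_hcomp] at h2 ⊢
            exact (HConn.of_mem hg hz hy).trans h2
        · rintro (rfl | ⟨x, hx, hg, h1⟩)
          · refine ⟨Or.inl rfl, fun x hx => mem_biUnion.2 ⟨x, hx, mem_hcomp.2 (HConn.refl _)⟩⟩
          · exact ⟨Or.inr hg, fun z hz => mem_biUnion.2 ⟨x, hx, h1 hz⟩⟩
      rw [hfil, hcomp', sum_insert, sum_biUnion, card_biUnion]
      · simp only [ih]
        push_cast
        simp
      · intro x hx y hy hxy
        rw [Function.onFun, disjoint_left]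
        intro z hz hz'
        rw [mem_hcomp] at hz hz'
        exact hxy (hsep x hx y hy (hz.symm.trans hz'))
      · intro x hx y hy hxy
        rw [Function.onFun, disjoint_left]
        intro g hz hz'
        rw [mem_filter] at hz hz'
        obtain ⟨z, hzg⟩ := hne g (mem_insert_of_mem hz.1)
        have h1 := mem_hcomp.1 (hz.2 hzg)
        have h2 := mem_hcomp.1 (hz'.2 hzg)
        exact hxy (hsep x hx y hy (h1.symm.trans h2))
      · simp [heE]
    · push Not at hb
      have hcomp' : hcomp (insert e E) b = hcomp E b := by
        ext v
        simp only [mem_hcomp]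
        constructor
        · intro hv
          rcases hv.insert_cases with hv | ⟨_, w, hw, h2⟩
          · exact hv
          · exact absurd h2 (hb w hw)
        · exact fun hv => hv.mono (subset_insert _ _)
      have : ¬ e ⊆ hcomp E b := by
        obtain ⟨t, ht⟩ := hen
        exact fun h => hb t ht (mem_hcomp.1 (h ht))
      rw [hcomp', filter_insert, if_neg this, ih]
end comp

/-! equivalence with the cycle definition -/

theorem HAcyc.cycles {E : Finset (Finset V)} (h : HAcyc E) (k : ℕ) (v : Fin (k + 3) → V)
    (hv : Function.Injective v) (hadj : ∀ j : Fin (k + 3), ∃ e ∈ E, v j ∈ e ∧ v (j + 1) ∈ e) :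
    ∃ e ∈ E, ∀ j, v j ∈ e := by
  obtain ⟨e, he, h0, h1⟩ := hadj 0
  refine ⟨e, he, ?_⟩
  let u : ℕ → V := fun i => v (Fin.ofNat (k + 3) i)
  have hu : ∀ i, ∃ e ∈ E, u i ∈ e ∧ u (i + 1) ∈ e := by
    intro i
    have := hadj (Fin.ofNat (k + 3) i)
    have h2 : Fin.ofNat (k + 3) i + 1 = Fin.ofNat (k + 3) (i + 1) := by
      ext; simp [Fin.val_add, Fin.ofNat]
    rwa [h2] at this
  have hu0 : u 0 ∈ e := by simpa [u] using h0
  have hu1 : u 1 ∈ e := by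
    have : Fin.ofNat (k + 3) 1 = 0 + 1 := by ext; simp [Fin.ofNat]
    simp only [u, this]; exact h1
  have hun : u (k + 3) ∈ e := by
    have : Fin.ofNat (k + 3) (k + 3) = 0 := by ext; simp [Fin.ofNat]
    simp only [u, this]; exact h0
  have step : ∀ i, (u i ∉ e ∨ u (i + 1) ∉ e) → HConn (E.erase e) (u i) (u (i + 1)) := by
    intro i hi
    obtain ⟨g, hg, h2, h3⟩ := hu i
    refine HConn.of_mem (e := g) ?_ h2 h3
    simp only [mem_erase, hg, and_true]
    rintro rfl
    tauto
  have fwd : ∀ d i, i + d = k + 3 → ∃ s, i ≤ s ∧ s ≤ k + 3 ∧ u s ∈ e ∧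
      HConn (E.erase e) (u i) (u s) := by
    intro d
    induction d with
    | zero => intro i hi; exact ⟨i, le_rfl, by omega, by simpa [← hi] using hun, HConn.refl _⟩
    | succ d ih =>
      intro i hi
      by_cases hie : u i ∈ e
      · exact ⟨i, le_rfl, by omega, hie, HConn.refl _⟩
      · obtain ⟨s, h1, h2, h3, h4⟩ := ih (i + 1) (by omega)
        exact ⟨s, by omega, h2, h3, (step i (Or.inl hie)).trans h4⟩
  have bwd : ∀ i, 1 ≤ i → ∃ s, 1 ≤ s ∧ s ≤ i ∧ u s ∈ e ∧
      HConn (E.erase e) (u i) (u s) := by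
    intro i hi
    induction i, hi using Nat.le_induction with
    | base => exact ⟨1, le_rfl, le_rfl, hu1, HConn.refl _⟩
    | succ i hi ih =>
      by_cases hie : u (i + 1) ∈ e
      · exact ⟨i + 1, by omega, le_rfl, hie, HConn.refl _⟩
      · obtain ⟨s, h1, h2, h3, h4⟩ := ih
        exact ⟨s, h1, by omega, h3, (step i (Or.inr hie)).symm.trans h4⟩
  have main : ∀ i, i < k + 3 → u i ∈ e := by
    intro i hi
    by_contra hie
    have hi1 : 1 ≤ i := by
      by_contra h'
      have : i = 0 := by omega
      subst this
      exact hie hu0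
    obtain ⟨s, h1, h2, h3, h4⟩ := fwd (k + 3 - i) i (by omega)
    obtain ⟨t, h5, h6, h7, h8⟩ := bwd i hi1
    have heq := h e he _ h3 _ h7 (h4.symm.trans h8)
    have heq := hv heq
    have hval := congrArg Fin.val heq
    simp only [Fin.ofNat] at hval
    have hti : t ≠ i := by rintro rfl; exact hie h7
    have hsi : s ≠ i := by rintro rfl; exact hie h3
    rw [Nat.mod_eq_of_lt (show t < k + 3 by omega)] at hval
    rcases Nat.lt_or_ge s (k + 3) with h' | h'
    · rw [Nat.mod_eq_of_lt h'] at hval; omega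
    · have : s = k + 3 := by omega
      subst this
      simp at hval
      omega
  intro j
  have := main j.1 j.2
  simpa [u] using this

theorem Hyperforest.acyc (F : Hyperforest V) : HAcyc F.edges := by
  intro e he x hx y hy hc
  by_contra hxy
  let G : SimpleGraph V :=
    { Adj := fun p q => p ≠ q ∧ ∃ f ∈ F.edges.erase e, p ∈ f ∧ q ∈ f
      symm := ⟨fun p q ⟨h, f, hf, h1, h2⟩ => ⟨h.symm, f, hf, h2, h1⟩⟩
      loopless := ⟨fun p h => h.1 rfl⟩ }
  have hreach : G.Reachable x y := by
    clear hxy hy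
    induction hc with
    | refl => exact SimpleGraph.Reachable.refl _
    | @tail p q _ h2 ih =>
      by_cases hpq : p = q
      · exact hpq ▸ ih
      · exact ih.trans (SimpleGraph.Adj.reachable (show G.Adj p q from ⟨hpq, h2⟩))
  have inter : ∀ f ∈ F.edges, ∀ p q, p ≠ q → p ∈ e → q ∈ e → p ∈ f → q ∈ f → f = e := by
    intro f hf p q hpq h1 h2 h3 h4
    by_contra hne
    have := F.inter f hf e he hne
    have h5 : 1 < (f ∩ e).card := Finset.one_lt_card.2 ⟨p, by simp [*], q, by simp [*], hpq⟩
    omega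
  obtain ⟨p, hp⟩ := hreach.exists_isPath
  have hadj : ∀ i, i < p.length → G.Adj (p.getVert i) (p.getVert (i + 1)) :=
    fun i hi => p.adj_getVert_succ hi
  have hinj := hp.getVert_injOn
  have hl0 : p.length ≠ 0 := fun h => hxy (SimpleGraph.Walk.eq_of_length_eq_zero h)
  by_cases hl1 : p.length = 1
  · obtain ⟨hne, f, hf, h1, h2⟩ := hadj 0 (by omega)
    have e1 : p.getVert 0 = x := by simp
    have e2 : p.getVert (0 + 1) = y := by rw [zero_add, ← hl1]; simp
    rw [e1] at h1
    rw [e2] at h2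
    have hf := mem_erase.1 hf
    exact hf.1 (inter f hf.2 x y hxy hx hy h1 h2)
  · obtain ⟨k, hk⟩ : ∃ k, p.length = k + 2 := ⟨p.length - 2, by omega⟩
    obtain ⟨g, hg, hall⟩ := F.cycles k (fun j => p.getVert j.1) (by
      intro i j hij
      have := hinj (show i.1 ≤ p.length by omega) (show j.1 ≤ p.length by omega) hij
      exact Fin.ext this) (by
      intro j
      by_cases hj : j.1 < k + 2
      · obtain ⟨-, f, hf, h1, h2⟩ := hadj j.1 (by omega)
        refine ⟨f, (mem_erase.1 hf).2, h1, ?_⟩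
        have : (j + 1).1 = j.1 + 1 := by
          rw [Fin.val_add]; simp; omega
        simpa [this] using h2
      · have hj' : j = Fin.last (k + 2) := by ext; simp; omega
        subst hj'
        refine ⟨e, he, ?_, ?_⟩
        · have : p.getVert (k + 2) = y := by rw [← hk]; simp
          simpa [this] using hy
        · simpa using hx)
    have hgx : x ∈ g := by simpa using hall 0
    have hgy : y ∈ g := by
      have := hall (Fin.last (k + 2))
      have h2 : p.getVert (k + 2) = y := by rw [← hk]; simp
      simpa [h2] using this
    have hge := inter g hg x y hxy hx hy hgx hgy
    subst hge
    obtain ⟨hne, f, hf, h1, h2⟩ := hadj 0 (by omega)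
    have hf := mem_erase.1 hf
    exact hf.1 (inter f hf.2 _ _ hne (by simpa using hx) (hall ⟨1, by omega⟩) h1 h2)

def Hyperforest.ofAcyc (E : Finset (Finset V)) (h2 : ∀ e ∈ E, 2 ≤ e.card) (h : HAcyc E) :
    Hyperforest V where
  edges := E
  two_le := h2
  inter := by
    intro e he f hf hne
    by_contra hc
    obtain ⟨x, hx, y, hy, hxy⟩ := Finset.one_lt_card.1 (not_le.1 hc)
    rw [mem_inter] at hx hy
    exact hne (h.eq_of_mem he hf hxy hx.1 hy.1 hx.2 hy.2)
  cycles := h.cycles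

end HFaux
section HFsum
open Finset

variable {V : Type*} [DecidableEq V]

def hloc (e0 : Finset V) (a : V) (E : Finset (Finset V)) : Finset (Finset V) :=
  E.filter (fun e => e ⊆ e0 ∧ a ∉ e)

theorem mem_hloc {e0 : Finset V} {a : V} {E : Finset (Finset V)} {e : Finset V} :
    e ∈ hloc e0 a E ↔ e ∈ E ∧ e ⊆ e0 ∧ a ∉ e := by simp [hloc]

def HInS (EF E : Finset (Finset V)) : Prop :=
  (∀ e ∈ E, 2 ≤ e.card) ∧ HAcyc E ∧ ∀ e ∈ E, ∃ f ∈ EF, e ⊆ f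

def HAtt (e0 : Finset V) (a b : V) (E : Finset (Finset V)) (f : Finset V) : Prop :=
  f ∈ E ∧ a ∈ f ∧ f ⊆ e0 ∧ ∃ v ∈ f, HConn (hloc e0 a E) v b

theorem hloc_conn_mem {e0 : Finset V} {a b : V} (hb : b ∈ e0) (hab : a ≠ b)
    {E : Finset (Finset V)} {v : V} (h : HConn (hloc e0 a E) v b) : v ∈ e0 ∧ v ≠ a := by
  rcases Relation.ReflTransGen.cases_head h with rfl | ⟨_, ⟨e, he, h1, _⟩, _⟩
  · exact ⟨hb, hab.symm⟩
  · rw [mem_hloc] at he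
    exact ⟨he.2.1 h1, fun h => he.2.2 (h ▸ h1)⟩

theorem hatt_uniq' {E K : Finset (Finset V)} (hE : HAcyc E) {a : V} {f f' : Finset V} (hf : f ∈ E)
    (hf' : f' ∈ E) (ha : a ∈ f) (ha' : a ∈ f') {v v' : V} (hv : v ∈ f) (hv' : v' ∈ f')
    (hne : v' ≠ a) (hc : HConn K v v') (hK : ∀ e ∈ K, (e ∈ E ∧ a ∉ e) ∨ e ⊆ f) : f = f' := by
  by_contra hff
  have hfm : f ∈ E.erase f' := by simp [hf, hff]
  have h1 : HConn (E.erase f') v v' := hc.le (by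
    intro e he x hx y hy
    rcases hK e he with ⟨h1, h2⟩ | h1
    · refine HConn.of_mem (e := e) ?_ hx hy
      simp only [mem_erase, h1, and_true]
      rintro rfl
      exact h2 ha'
    · exact HConn.of_mem hfm (h1 hx) (h1 hy))
  exact hne (hE f' hf' a ha' v' hv' ((HConn.of_mem hfm ha hv).trans h1)).symm

theorem HAtt.uniq {e0 : Finset V} {a b : V} (hb : b ∈ e0) (hab : a ≠ b) {E : Finset (Finset V)}
    (hE : HAcyc E) {f f' : Finset V}
    (h : HAtt e0 a b E f) (h' : HAtt e0 a b E f') : f = f' := by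
  obtain ⟨h1, h2, h3, v, h4, h5⟩ := h
  obtain ⟨h1', h2', h3', v', h4', h5'⟩ := h'
  refine hatt_uniq' hE h1 h1' h2 h2' h4 h4' (hloc_conn_mem hb hab h5').2 (h5.trans h5'.symm) ?_
  intro e he
  rw [mem_hloc] at he
  exact Or.inl ⟨he.1, he.2.2⟩

theorem hnot_conn {EF : Finset (Finset V)} (hF : HAcyc EF) {e0 : Finset V} (he0 : e0 ∈ EF) {a b : V}
    (ha : a ∈ e0) (hb : b ∈ e0) (hab : a ≠ b) {H : Finset (Finset V)} (hH : HInS EF H)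
    (hno : ∀ f, ¬ HAtt e0 a b H f) {v : V} (hv : HConn (hloc e0 a H) v b) : ¬ HConn H a v := by
  intro hc
  have h1 := hF.local_conn hH.2.2 he0 ha (hloc_conn_mem hb hab hv).1 hc
  have h2 : HConn (H.filter (fun e => e ⊆ e0)) v b := hv.mono (by
    intro e he
    rw [mem_hloc] at he
    simp [he.1, he.2.1])
  obtain ⟨f, hf, haf, u, hu, h3⟩ := HConn.first_edge hab (h1.trans h2)
  rw [filter_filter] at h3
  rw [mem_filter] at hf
  exact hno f ⟨hf.1, haf, hf.2, u, hu, h3⟩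

theorem hadd_mem {EF : Finset (Finset V)} (hF : HAcyc EF) {e0 : Finset V} (he0 : e0 ∈ EF) {a b : V}
    (ha : a ∈ e0) (hb : b ∈ e0) (hab : a ≠ b) {H : Finset (Finset V)} (hH : HInS EF H)
    (hno : ∀ f, ¬ HAtt e0 a b H f) {v : V} (hv : HConn (hloc e0 a H) v b) :
    HInS EF (insert {a, v} H) ∧ HAtt e0 a b (insert {a, v} H) {a, v} ∧ {a, v} ∉ H ∧ v ≠ a := by
  have hve := hloc_conn_mem hb hab hv
  have hsub : ({a, v} : Finset V) ⊆ e0 := by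
    intro x hx
    simp only [mem_insert, mem_singleton] at hx
    rcases hx with rfl | rfl
    · exact ha
    · exact hve.1
  have hnc := hnot_conn hF he0 ha hb hab hH hno hv
  refine ⟨⟨?_, hH.2.1.add hnc, ?_⟩, ⟨mem_insert_self _ _, by simp, hsub, v, by simp, ?_⟩, ?_, hve.2⟩
  · intro e he
    rcases mem_insert.1 he with rfl | he
    · rw [card_pair hve.2.symm]
    · exact hH.1 e he
  · intro e he
    rcases mem_insert.1 he with rfl | he
    · exact ⟨e0, he0, hsub⟩
    · exact hH.2.2 e he
  · refine hv.mono ?_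
    exact filter_subset_filter _ (subset_insert _ _)
  · intro hm
    exact hnc (HConn.of_mem hm (by simp) (by simp))

theorem herase_mem {EF : Finset (Finset V)} {e0 : Finset V} {a b : V}
    (hb : b ∈ e0) (hab : a ≠ b) {E : Finset (Finset V)} (hE : HInS EF E)
    {f : Finset V} (hf : HAtt e0 a b E f) (hc : f.card = 2) :
    HInS EF (E.erase f) ∧ (∀ g, ¬ HAtt e0 a b (E.erase f) g) ∧
      ∃ v, f = {a, v} ∧ HConn (hloc e0 a (E.erase f)) v b := by
  have hloceq : hloc e0 a (E.erase f) = hloc e0 a E := by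
    ext e
    simp only [mem_hloc, mem_erase]
    constructor
    · tauto
    · rintro ⟨h1, h2, h3⟩
      refine ⟨⟨?_, h1⟩, h2, h3⟩
      rintro rfl
      exact h3 hf.2.1
  refine ⟨⟨fun e he => hE.1 e (mem_of_mem_erase he), hE.2.1.mono (erase_subset _ _),
    fun e he => hE.2.2 e (mem_of_mem_erase he)⟩, ?_, ?_⟩
  · intro g hg
    obtain ⟨h1, h2, h3, v, h4, h5⟩ := hg
    rw [hloceq] at h5
    exact (mem_erase.1 h1).1
      (HAtt.uniq hb hab hE.2.1 ⟨(mem_erase.1 h1).2, h2, h3, v, h4, h5⟩ hf)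
  · rw [hloceq]
    obtain ⟨h1, h2, h3, v, h4, h5⟩ := hf
    refine ⟨v, ?_, h5⟩
    symm
    apply eq_of_subset_of_card_le
    · intro x hx
      simp only [mem_insert, mem_singleton] at hx
      rcases hx with rfl | rfl
      · exact h2
      · exact h4
    · rw [hc, card_pair (hloc_conn_mem hb hab h5).2.symm]

theorem henl_mem {EF : Finset (Finset V)} (hF : HAcyc EF) {e0 : Finset V} (he0 : e0 ∈ EF) {a b : V}
    (ha : a ∈ e0) (hb : b ∈ e0) (hab : a ≠ b) {H : Finset (Finset V)} (hH : HInS EF H)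
    (hno : ∀ f, ¬ HAtt e0 a b H f) {e : Finset V} (he : e ∈ H)
    (hv : ∀ v ∈ e, HConn (hloc e0 a H) v b) :
    HInS EF (insert (insert a e) (H.erase e)) ∧
      HAtt e0 a b (insert (insert a e) (H.erase e)) (insert a e) ∧ insert a e ∉ H ∧ a ∉ e := by
  have hae : a ∉ e := fun h => (hloc_conn_mem hb hab (hv a h)).2 rfl
  have hee0 : e ⊆ e0 := fun v h => (hloc_conn_mem hb hab (hv v h)).1
  have hsub : insert a e ⊆ e0 := insert_subset ha hee0
  have hnc : ∀ v ∈ e, ¬ HConn H a v := fun v h => hnot_conn hF he0 ha hb hab hH hno (hv v h)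
  have hne : e.Nonempty := by
    have := hH.1 e he
    exact card_pos.1 (by omega)
  obtain ⟨t, ht⟩ := hne
  refine ⟨⟨?_, hH.2.1.enlarge he hnc, ?_⟩, ⟨mem_insert_self _ _, by simp, hsub, ?_⟩, ?_, hae⟩
  · intro g hg
    rcases mem_insert.1 hg with rfl | hg
    · rw [card_insert_of_notMem hae]
      have := hH.1 e he
      omega
    · exact hH.1 g (mem_of_mem_erase hg)
  · intro g hg
    rcases mem_insert.1 hg with rfl | hg
    · exact ⟨e0, he0, hsub⟩
    · exact hH.2.2 g (mem_of_mem_erase hg)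
  · have hel : e ∈ hloc e0 a H := mem_hloc.2 ⟨he, hee0, hae⟩
    have hmono : (hloc e0 a H).erase e ⊆ hloc e0 a (insert (insert a e) (H.erase e)) := by
      intro g hg
      simp only [mem_hloc, mem_erase, mem_insert] at hg ⊢
      tauto
    rcases (hv t ht).erase_cases hel with h | ⟨_, w, hw, h⟩
    · exact ⟨t, by simp [ht], h.mono hmono⟩
    · exact ⟨w, by simp [hw], h.mono hmono⟩
  · intro hm
    exact hnc t ht (HConn.of_mem hm (by simp) (by simp [ht]))

theorem hshr_mem {EF : Finset (Finset V)} {e0 : Finset V} {a b : V}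
    (hb : b ∈ e0) (hab : a ≠ b) {E : Finset (Finset V)} (hE : HInS EF E)
    {f : Finset V} (hf : HAtt e0 a b E f) (hc : f.card ≠ 2) :
    HInS EF (insert (f.erase a) (E.erase f)) ∧
      (∀ g, ¬ HAtt e0 a b (insert (f.erase a) (E.erase f)) g) ∧
      (∀ v ∈ f.erase a, HConn (hloc e0 a (insert (f.erase a) (E.erase f))) v b) ∧
      f.erase a ∉ E := by
  obtain ⟨h1, h2, h3, v, h4, h5⟩ := hf
  have hfc := hE.1 f h1
  have hcard : 2 ≤ (f.erase a).card := by
    rw [card_erase_of_mem h2]; omega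
  have hfE : f.erase a ∉ E := by
    intro hm
    have := hE.2.1.eq_of_subset hm h1 hcard (erase_subset _ _)
    have h2' := h2
    rw [← this] at h2'
    exact notMem_erase a f h2'
  have hva := (hloc_conn_mem hb hab h5).2
  have hv' : HConn (hloc e0 a (insert (f.erase a) (E.erase f))) v b := h5.mono (by
    intro g hg
    simp only [mem_hloc, mem_erase, mem_insert] at hg ⊢
    refine ⟨Or.inr ⟨?_, hg.1⟩, hg.2⟩
    rintro rfl
    exact hg.2.2 h2)
  refine ⟨⟨?_, hE.2.1.shrink h1 (erase_subset _ _), ?_⟩, ?_, ?_, hfE⟩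
  · intro g hg
    rcases mem_insert.1 hg with rfl | hg
    · exact hcard
    · exact hE.1 g (mem_of_mem_erase hg)
  · intro g hg
    rcases mem_insert.1 hg with rfl | hg
    · obtain ⟨k, hk, hk'⟩ := hE.2.2 f h1
      exact ⟨k, hk, (erase_subset _ _).trans hk'⟩
    · exact hE.2.2 g (mem_of_mem_erase hg)
  · rintro g ⟨g1, g2, g3, u, g4, g5⟩
    rcases mem_insert.1 g1 with rfl | g1
    · exact notMem_erase a f g2
    · have g1 := mem_erase.1 g1
      refine g1.1 (hatt_uniq' hE.2.1 h1 g1.2 h2 g2 h4 g4 (hloc_conn_mem hb hab g5).2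
        (hv'.trans g5.symm) ?_).symm
      intro k hk
      simp only [mem_hloc, mem_erase, mem_insert] at hk
      rcases hk with ⟨rfl | hk, hk2⟩
      · exact Or.inr (erase_subset _ _)
      · exact Or.inl ⟨hk.2, hk2.2⟩
  · intro u hu
    refine HConn.trans (HConn.of_mem (e := f.erase a) ?_ hu (mem_erase.2 ⟨hva, h4⟩)) hv'
    exact mem_hloc.2 ⟨mem_insert_self _ _, (erase_subset _ _).trans h3, notMem_erase a f⟩

def hwt (E : Finset (Finset V)) : ℤ := ∏ e ∈ E, (-(((e.card - 2).factorial : ℕ) : ℤ))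

theorem hwt_add {H : Finset (Finset V)} {a v : V} (hva : v ≠ a) (h : {a, v} ∉ H) :
    hwt (insert {a, v} H) = - hwt H := by
  rw [hwt, prod_insert h, card_pair hva.symm]
  simp [hwt]

theorem hwt_enl {H : Finset (Finset V)} {a : V} {e : Finset V} (he : e ∈ H) (hc : 2 ≤ e.card)
    (hae : a ∉ e) (h : insert a e ∉ H) :
    hwt (insert (insert a e) (H.erase e)) = ((e.card : ℤ) - 1) * hwt H := by
  rw [hwt, prod_insert (fun h' => h (mem_of_mem_erase h')), card_insert_of_notMem hae, hwt,
    ← mul_prod_erase H _ he]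
  obtain ⟨k, hk⟩ : ∃ k, e.card = k + 2 := ⟨e.card - 2, by omega⟩
  rw [hk]
  have h1 : k + 2 + 1 - 2 = k + 1 := by omega
  have h2 : k + 2 - 2 = k := by omega
  rw [h1, h2, Nat.factorial_succ]
  push_cast
  ring

open Classical in
theorem hsum_zero [Fintype V] {EF : Finset (Finset V)} (hF : HAcyc EF) (h2F : ∀ e ∈ EF, 2 ≤ e.card)
    (hne : EF ≠ ∅) : ∑ E ∈ univ.filter (fun E => HInS EF E), hwt E = 0 := by
  obtain ⟨e0, he0⟩ := nonempty_iff_ne_empty.2 hne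
  obtain ⟨a, ha, b, hb, hab⟩ := one_lt_card.1 (h2F e0 he0)
  set S := univ.filter (fun E => HInS EF E) with hS
  set S0 := S.filter (fun E => ∀ f, ¬ HAtt e0 a b E f) with hS0
  have memS0 : ∀ {H}, H ∈ S0 ↔ HInS EF H ∧ ∀ f, ¬ HAtt e0 a b H f := by simp [hS0, hS]
  have memS : ∀ {H}, H ∈ S ↔ HInS EF H := by simp [hS]
  -- split off the attached ones
  have split : ∑ E ∈ S, hwt E = ∑ E ∈ S0, hwt E +
      ∑ p ∈ (univ : Finset (Finset (Finset V) × Finset V)).filter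
        (fun p => HInS EF p.1 ∧ HAtt e0 a b p.1 p.2), hwt p.1 := by
    rw [sum_finset_product _ S (fun E => univ.filter (HAtt e0 a b E)) (by simp [hS]), hS0,
      sum_filter (s := S), ← sum_add_distrib]
    refine sum_congr rfl fun E hE => ?_
    rw [memS] at hE
    by_cases h : ∃ f, HAtt e0 a b E f
    · obtain ⟨f, hf⟩ := h
      have : univ.filter (HAtt e0 a b E) = {f} := by
        ext g
        simp only [mem_filter, mem_univ, true_and, mem_singleton]
        exact ⟨fun hg => HAtt.uniq hb hab hE.2.1 hg hf, fun h => h ▸ hf⟩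
      rw [this, if_neg (fun h => h f hf)]
      simp
    · push Not at h
      rw [if_pos h, filter_false_of_mem (fun f _ => h f)]
      simp
  have P2 : ∑ p ∈ (univ : Finset (Finset (Finset V) × Finset V)).filter
        (fun p => (HInS EF p.1 ∧ HAtt e0 a b p.1 p.2) ∧ p.2.card = 2), hwt p.1 =
      ∑ H ∈ S0, ∑ v ∈ hcomp (hloc e0 a H) b, (- hwt H) := by
    rw [← sum_finset_product ((univ : Finset (Finset (Finset V) × V)).filter
      (fun p => p.1 ∈ S0 ∧ p.2 ∈ hcomp (hloc e0 a p.1) b)) S0 (fun H => hcomp (hloc e0 a H) b)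
      (by simp) (f := fun p => - hwt p.1)]
    symm
    refine sum_bij (fun p _ => (insert {a, p.2} p.1, {a, p.2})) ?_ ?_ ?_ ?_
    · rintro ⟨H, v⟩ hp
      simp only [mem_filter, mem_univ, true_and, memS0, mem_hcomp] at hp ⊢
      have := hadd_mem hF he0 ha hb hab hp.1.1 hp.1.2 hp.2
      exact ⟨⟨this.1, this.2.1⟩, card_pair this.2.2.2.symm⟩
    · rintro ⟨H, v⟩ hp ⟨H', v'⟩ hp' heq
      simp only [mem_filter, mem_univ, true_and, memS0, mem_hcomp] at hp hp'
      have h1 := hadd_mem hF he0 ha hb hab hp.1.1 hp.1.2 hp.2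
      have h2 := hadd_mem hF he0 ha hb hab hp'.1.1 hp'.1.2 hp'.2
      simp only [Prod.mk.injEq] at heq
      have hvv : v = v' := by
        have : v ∈ ({a, v'} : Finset V) := by rw [← heq.2]; simp
        simpa [h1.2.2.2] using this
      subst hvv
      have : H = H' := by
        rw [← erase_insert h1.2.2.1, heq.1, erase_insert h2.2.2.1]
      rw [this]
    · rintro ⟨E, f⟩ hp
      simp only [mem_filter, mem_univ, true_and] at hp
      obtain ⟨h1, h2, v, h3, h4⟩ := herase_mem hb hab hp.1.1 hp.1.2 hp.2
      refine ⟨(E.erase f, v), ?_, ?_⟩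
      · simp only [mem_filter, mem_univ, true_and, memS0, mem_hcomp]
        exact ⟨⟨h1, h2⟩, h4⟩
      · simp only [← h3, insert_erase hp.1.2.1]
    · rintro ⟨H, v⟩ hp
      simp only [mem_filter, mem_univ, true_and, memS0, mem_hcomp] at hp
      have h1 := hadd_mem hF he0 ha hb hab hp.1.1 hp.1.2 hp.2
      exact (hwt_add h1.2.2.2 h1.2.2.1).symm
  have P3 : ∑ p ∈ (univ : Finset (Finset (Finset V) × Finset V)).filter
        (fun p => (HInS EF p.1 ∧ HAtt e0 a b p.1 p.2) ∧ ¬ p.2.card = 2), hwt p.1 =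
      ∑ H ∈ S0, ∑ e ∈ H.filter (fun e => e ⊆ hcomp (hloc e0 a H) b),
        (((e.card : ℤ) - 1) * hwt H) := by
    rw [← sum_finset_product ((univ : Finset (Finset (Finset V) × Finset V)).filter
      (fun p => p.1 ∈ S0 ∧ p.2 ∈ p.1.filter (fun e => e ⊆ hcomp (hloc e0 a p.1) b))) S0
      (fun H => H.filter (fun e => e ⊆ hcomp (hloc e0 a H) b))
      (by simp) (f := fun p => ((p.2.card : ℤ) - 1) * hwt p.1)]
    symm
    have mem3 : ∀ {H : Finset (Finset V)} {e : Finset V}, (H, e) ∈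
        ((univ : Finset (Finset (Finset V) × Finset V)).filter
      (fun p => p.1 ∈ S0 ∧ p.2 ∈ p.1.filter (fun e => e ⊆ hcomp (hloc e0 a p.1) b))) ↔
        (HInS EF H ∧ ∀ f, ¬ HAtt e0 a b H f) ∧ e ∈ H ∧ ∀ v ∈ e, HConn (hloc e0 a H) v b := by
      intro H e
      simp only [mem_filter, mem_univ, true_and, memS0, subset_iff, mem_hcomp]
    refine sum_bij' (fun p _ => (insert (insert a p.2) (p.1.erase p.2), insert a p.2))
      (fun p _ => (insert (p.2.erase a) (p.1.erase p.2), p.2.erase a)) ?_ ?_ ?_ ?_ ?_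
    · rintro ⟨H, e⟩ hp
      rw [mem3] at hp
      have := henl_mem hF he0 ha hb hab hp.1.1 hp.1.2 hp.2.1 hp.2.2
      simp only [mem_filter, mem_univ, true_and]
      refine ⟨⟨this.1, this.2.1⟩, ?_⟩
      rw [card_insert_of_notMem this.2.2.2]
      have := hp.1.1.1 e hp.2.1
      omega
    · rintro ⟨E, f⟩ hp
      rw [mem3]
      simp only [mem_filter, mem_univ, true_and] at hp
      obtain ⟨h1, h2, h3, h4⟩ := hshr_mem hb hab hp.1.1 hp.1.2 hp.2
      exact ⟨⟨h1, h2⟩, mem_insert_self _ _, h3⟩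
    · rintro ⟨H, e⟩ hp
      rw [mem3] at hp
      have := henl_mem hF he0 ha hb hab hp.1.1 hp.1.2 hp.2.1 hp.2.2
      simp only
      rw [erase_insert (fun h => this.2.2.1 (mem_of_mem_erase h)), erase_insert this.2.2.2,
        insert_erase hp.2.1]
    · rintro ⟨E, f⟩ hp
      simp only [mem_filter, mem_univ, true_and] at hp
      obtain ⟨h1, h2, h3, h4⟩ := hshr_mem hb hab hp.1.1 hp.1.2 hp.2
      simp only
      rw [erase_insert (fun h => h4 (mem_of_mem_erase h)), insert_erase hp.1.2.2.1,
        insert_erase hp.1.2.1]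
    · rintro ⟨H, e⟩ hp
      rw [mem3] at hp
      have := henl_mem hF he0 ha hb hab hp.1.1 hp.1.2 hp.2.1 hp.2.2
      exact (hwt_enl hp.2.1 (hp.1.1.1 e hp.2.1) this.2.2.2 this.2.2.1).symm
  rw [split, ← sum_filter_add_sum_filter_not
    (univ.filter (fun p : Finset (Finset V) × Finset V => HInS EF p.1 ∧ HAtt e0 a b p.1 p.2))
    (fun p => p.2.card = 2), filter_filter,
    filter_filter, P2, P3, ← sum_add_distrib, ← sum_add_distrib]
  refine sum_eq_zero fun H hH => ?_
  rw [memS0] at hH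
  have hA : HAcyc (hloc e0 a H) := hH.1.2.1.mono (filter_subset _ _)
  have hcount := hA.count (by
    intro e he
    have := hH.1.1 e (mem_hloc.1 he).1
    exact card_pos.1 (by omega)) b
  have hfil : (hloc e0 a H).filter (fun e => e ⊆ hcomp (hloc e0 a H) b) =
      H.filter (fun e => e ⊆ hcomp (hloc e0 a H) b) := by
    ext e
    simp only [mem_filter, mem_hloc]
    constructor
    · tauto
    · rintro ⟨h1, h2⟩
      refine ⟨⟨h1, ?_, ?_⟩, h2⟩
      · exact fun v hv => (hloc_conn_mem hb hab (mem_hcomp.1 (h2 hv))).1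
      · exact fun hv => (hloc_conn_mem hb hab (mem_hcomp.1 (h2 hv))).2 rfl
  rw [hfil] at hcount
  rw [← sum_mul, hcount, sum_const]
  simp
  ring

end HFsum
section HFfinal
open Finset

variable {V : Type*} [DecidableEq V]

theorem Hyperforest.edges_inj {F G : Hyperforest V} (h : F.edges = G.edges) : F = G := by
  cases F; cases G; simp at h; subst h; rfl

theorem HFle.antisymm' {F G : Hyperforest V} (h : HFle F G) (h' : HFle G F) : F = G := by
  have key : ∀ {F G : Hyperforest V}, HFle F G → HFle G F → F.edges ⊆ G.edges := by
    intro F G h h' e he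
    obtain ⟨f, hf, h1⟩ := h e he
    obtain ⟨g, hg, h2⟩ := h' f hf
    have := F.acyc.eq_of_subset he hg (F.two_le e he) (h1.trans h2)
    subst this
    rwa [h1.antisymm h2]
  exact Hyperforest.edges_inj ((key h h').antisymm (key h' h))

theorem hwt_eq (E : Finset (Finset V)) (h2 : ∀ e ∈ E, 2 ≤ e.card) :
    hwt E = ∏ᶠ j ∈ Set.Ici 2,
      (-(((j - 2).factorial : ℕ) : ℤ)) ^ (E.filter fun e => e.card = j).card := by
  rw [finprod_mem_eq_prod_of_inter_mulSupport_eq (t := E.image card)]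
  · rw [hwt, ← prod_fiberwise_of_maps_to (g := card) (t := E.image card)
      (fun e he => mem_image_of_mem _ he)]
    refine prod_congr rfl fun j _ => ?_
    rw [prod_congr rfl (g := fun _ => -(((j - 2).factorial : ℕ) : ℤ)), prod_const]
    intro e he
    rw [(mem_filter.1 he).2]
  · ext j
    simp only [Set.mem_inter_iff, Set.mem_Ici, Function.mem_mulSupport, coe_image, Set.mem_image,
      mem_coe]
    constructor
    · rintro ⟨h1, h3⟩
      refine ⟨?_, h3⟩
      by_contra hne
      push Not at hne
      rw [filter_false_of_mem hne] at h3
      simp at h3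
    · rintro ⟨⟨e, he, rfl⟩, h3⟩
      exact ⟨h2 e he, h3⟩

end HFfinal

/-- The Möbius function of the poset of hyperforests (defined by `μ(⊥) = 1` and
`μ(F) = -∑_{F' < F} μ(F')`) is given by `μ(F) = ∏_{j ≥ 2} (-(j-2)!)^{κ_j}`,
where `κ_j` is the number of hyperedges of `F` with exactly `j` vertices. -/
theorem stmt13 {V : Type*} [DecidableEq V] [Fintype V]
    (μ : Hyperforest V → ℤ)
    (hbot : ∀ F : Hyperforest V, F.edges = ∅ → μ F = 1)
    (hrec : ∀ F : Hyperforest V, F.edges ≠ ∅ →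
      μ F = -∑ᶠ F' ∈ {F' : Hyperforest V | HFle F' F ∧ F' ≠ F}, μ F')
    (F : Hyperforest V) :
    μ F = ∏ᶠ j ∈ Set.Ici 2,
      (-(((j - 2).factorial : ℕ) : ℤ)) ^ (F.edges.filter fun e => e.card = j).card := by
  classical
  rw [← hwt_eq F.edges F.two_le]
  let : Fintype (Hyperforest V) :=
    Fintype.ofInjective (Hyperforest.edges (V := V)) (fun _ _ h => Hyperforest.edges_inj h)
  suffices H : ∀ n, ∀ F : Hyperforest V,
      (Finset.univ.filter (fun G => HFle G F)).card = n → μ F = hwt F.edges from H _ F rfl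
  intro n
  induction n using Nat.strong_induction_on with
  | _ n ih =>
    intro F hn
    by_cases hF : F.edges = ∅
    · rw [hbot F hF, hF]; simp [hwt]
    have hrefl : HFle F F := fun e he => ⟨e, he, Finset.Subset.refl _⟩
    have hset : {F' : Hyperforest V | HFle F' F ∧ F' ≠ F} =
        ((Finset.univ.filter (fun G => HFle G F)).erase F : Finset (Hyperforest V)) := by
      ext G; simp [and_comm]
    have hlt : ∀ G ∈ (Finset.univ.filter (fun G => HFle G F)).erase F, μ G = hwt G.edges := by
      intro G hG
      simp only [Finset.mem_erase, Finset.mem_filter, Finset.mem_univ, true_and] at hG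
      refine ih _ ?_ G rfl
      rw [← hn]
      apply Finset.card_lt_card
      rw [Finset.ssubset_iff_of_subset]
      · refine ⟨F, by simp [hrefl], ?_⟩
        simp only [Finset.mem_filter, Finset.mem_univ, true_and]
        exact fun h => hG.1 (hG.2.antisymm' h)
      · intro K hK
        simp only [Finset.mem_filter, Finset.mem_univ, true_and] at hK ⊢
        intro e he
        obtain ⟨f, hf, h1⟩ := hK e he
        obtain ⟨g, hg, h2⟩ := hG.2 f hf
        exact ⟨g, hg, h1.trans h2⟩
    have hz : ∑ G ∈ Finset.univ.filter (fun G => HFle G F), hwt G.edges = 0 := by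
      rw [← hsum_zero F.acyc F.two_le hF]
      refine Finset.sum_bij (fun G _ => G.edges) ?_ ?_ ?_ ?_
      · intro G hG
        simp only [Finset.mem_filter, Finset.mem_univ, true_and] at hG ⊢
        exact ⟨G.two_le, G.acyc, hG⟩
      · intro G _ G' _ h
        exact Hyperforest.edges_inj h
      · intro E hE
        simp only [Finset.mem_filter, Finset.mem_univ, true_and] at hE
        exact ⟨Hyperforest.ofAcyc E hE.1 hE.2.1, by
          rw [Finset.mem_filter]; exact ⟨Finset.mem_univ _, hE.2.2⟩, rfl⟩
      · intro G _
        rfl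
    rw [hrec F hF, hset, finsum_mem_coe_finset, Finset.sum_congr rfl hlt]
    rw [← Finset.add_sum_erase _ _ (show F ∈ Finset.univ.filter (fun G => HFle G F) by
      simp [hrefl])] at hz
    linarith
end

section
/- For n ≥ 2 and 1 ≤ k ≤ n-1, the number of hypertrees with k hyperedges on n labelled vertices equals n^{k-1} S_2(n-1,k), where S_2 denotes Stirling numbers of the second kind (Husimi's theorem). In particular, for k = n-1 this recovers Cayley's formula: there are n^{n-2} labelled trees on n vertices. -/
/-- A hyperforest is connected (i.e. is a hypertree) if any two vertices are
joined by a path of consecutively adjacent vertices. -/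
def HFConnected {V : Type*} [DecidableEq V] (F : Hyperforest V) : Prop :=
  ∀ u v : V, Relation.ReflTransGen (fun a b => a ≠ b ∧ ∃ e ∈ F.edges, a ∈ e ∧ b ∈ e) u v

open Finset in
/-- acyclic parent maps on the set `A` of blocks, with root set `R` -/
def HGood {ι V : Type*} [DecidableEq ι] [DecidableEq V] (B : ι → Finset V) (v0 : V)
    (A : Finset ι) (R : Finset V) (p : ι → V) : Prop :=
  (∀ a ∈ A, p a ∈ R ∪ A.biUnion B) ∧ (∀ a, a ∉ A → p a = v0) ∧
    ∀ S ⊆ A, S.Nonempty → ∃ a ∈ S, p a ∉ S.biUnion B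

open Finset Classical in
theorem hgood_fiber {ι V : Type*} [Fintype ι] [Fintype V] [DecidableEq ι] [DecidableEq V]
    (B : ι → Finset V) (v0 : V)
    (A : Finset ι) (R : Finset V) (hR : Disjoint R (A.biUnion B)) (S : Finset ι) (hS : S ⊆ A) :
    #{p ∈ ({p | HGood B v0 A R p} : Finset (ι → V)) | {a ∈ A | p a ∈ R} = S} =
      #R ^ #S * #({p | HGood B v0 (A \ S) (S.biUnion B) p} : Finset (ι → V)) := by
  have hc : #(Fintype.piFinset (fun a => if a ∈ S then R else {v0})) = #R ^ #S := by
    rw [Fintype.card_piFinset]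
    simp only [apply_ite Finset.card, card_singleton]
    rw [Finset.prod_ite]
    simp
  have hR' : ∀ v ∈ R, ∀ a ∈ A, v ∉ B a := by
    intro v hv a ha hva
    exact Finset.disjoint_left.1 hR hv (mem_biUnion.2 ⟨a, ha, hva⟩)
  rw [← hc, ← card_product]
  refine card_nbij' (fun p => (fun a => if a ∈ S then p a else v0, fun a => if a ∈ S then v0 else p a))
    (fun q a => if a ∈ S then q.1 a else q.2 a) ?_ ?_ ?_ ?_
  · intro p hp
    simp only [coe_filter, mem_filter, mem_univ, true_and, Set.mem_ofPred_eq] at hp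
    obtain ⟨⟨h1, h2, h3⟩, h4⟩ := hp
    simp only [coe_product, Set.mem_prod, mem_coe, Fintype.mem_piFinset, mem_filter, mem_univ, true_and]
    have hm : ∀ a ∈ A, (a ∈ S ↔ p a ∈ R) := by
      intro a ha
      rw [← h4]; simp [ha]
    refine ⟨?_, ?_, ?_, ?_⟩
    · intro a
      by_cases ha : a ∈ S
      · simpa [ha] using (hm a (hS ha)).1 ha
      · simp [ha]
    · intro a ha
      rw [mem_sdiff] at ha
      have h5 := h1 a ha.1
      have h6 := (hm a ha.1).not.1 ha.2
      simp only [ha.2, if_false]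
      simp only [mem_union, h6, false_or, mem_biUnion, mem_sdiff] at h5 ⊢
      obtain ⟨b, hb, hab⟩ := h5
      by_cases hbS : b ∈ S
      · exact Or.inl ⟨b, hbS, hab⟩
      · exact Or.inr ⟨b, ⟨hb, hbS⟩, hab⟩
    · intro a ha
      by_cases haS : a ∈ S
      · simp [haS]
      · simp only [haS, if_false]
        exact h2 a (fun h => ha (mem_sdiff.2 ⟨h, haS⟩))
    · intro U hU hne
      obtain ⟨a, ha, h⟩ := h3 U (hU.trans sdiff_subset) hne
      refine ⟨a, ha, ?_⟩
      have := (mem_sdiff.1 (hU ha)).2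
      simpa [this] using h
  · rintro ⟨q1, q2⟩ hq
    simp only [coe_product, Set.mem_prod, mem_coe, Fintype.mem_piFinset, mem_filter, mem_univ, true_and] at hq
    obtain ⟨h0, h1, h2, h3⟩ := hq
    have h0' : ∀ a ∈ S, q1 a ∈ R := by
      intro a ha; simpa [ha] using h0 a
    have hq2 : ∀ a ∈ A, a ∉ S → ∃ b ∈ A, q2 a ∈ B b := by
      intro a ha haS
      have := h1 a (mem_sdiff.2 ⟨ha, haS⟩)
      simp only [mem_union, mem_biUnion, mem_sdiff] at this
      rcases this with ⟨b, hb, h⟩ | ⟨b, hb, h⟩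
      · exact ⟨b, hS hb, h⟩
      · exact ⟨b, hb.1, h⟩
    simp only [coe_filter, mem_filter, mem_univ, true_and, Set.mem_ofPred_eq]
    refine ⟨⟨?_, ?_, ?_⟩, ?_⟩
    · intro a ha
      by_cases haS : a ∈ S
      · simp [haS, h0' a haS]
      · simp only [haS, if_false]
        exact mem_union_right _ (mem_biUnion.2 (hq2 a ha haS))
    · intro a ha
      have haS : a ∉ S := fun h => ha (hS h)
      simp only [haS, if_false]
      exact h2 a (fun h => ha (mem_sdiff.1 h).1)
    · intro U hU hne
      by_cases hUS : ∃ a ∈ U, a ∈ S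
      · obtain ⟨a, haU, haS⟩ := hUS
        refine ⟨a, haU, ?_⟩
        simp only [haS, if_true, mem_biUnion, not_exists, not_and]
        intro b hb
        exact hR' _ (h0' a haS) b (hU hb)
      · push Not at hUS
        obtain ⟨a, ha, h⟩ := h3 U (fun a ha => mem_sdiff.2 ⟨hU ha, hUS a ha⟩) hne
        refine ⟨a, ha, ?_⟩
        simpa [hUS a ha] using h
    · ext a
      simp only [mem_filter]
      by_cases haS : a ∈ S
      · simp [haS, hS haS, h0' a haS]
      · simp only [haS, if_false, iff_false, not_and]
        intro ha hcon
        obtain ⟨b, hb, h⟩ := hq2 a ha haS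
        exact hR' _ hcon b hb h
  · intro p hp
    funext a
    by_cases haS : a ∈ S <;> simp [haS]
  · rintro ⟨q1, q2⟩ hq
    simp only [coe_product, Set.mem_prod, mem_coe, Fintype.mem_piFinset, mem_filter, mem_univ, true_and] at hq
    obtain ⟨h0, h1, h2, h3⟩ := hq
    refine Prod.ext ?_ ?_
    · funext a
      by_cases haS : a ∈ S
      · simp [haS]
      · have := h0 a
        simp only [haS, if_false, mem_singleton] at this
        simp [haS, this]
    · funext a
      by_cases haS : a ∈ S
      · have := h2 a (by simp [haS])
        simp [haS, this]
      · simp [haS]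

open Finset in
theorem hgood_sum {ι : Type*} [DecidableEq ι] (w : ι → ℕ) (A : Finset ι) (hA : A.Nonempty) (c W : ℕ) :
    ∑ S ∈ A.powerset, c ^ #S * ((∑ a ∈ S, w a) * W ^ (#A - #S)) =
      (∑ a ∈ A, w a) * (c * (c + W) ^ (#A - 1)) := by
  have h1 : ∀ S ∈ A.powerset, c ^ #S * ((∑ a ∈ S, w a) * W ^ (#A - #S)) =
      ∑ a ∈ A, if a ∈ S then w a * (c ^ #S * W ^ (#A - #S)) else 0 := by
    intro S hS
    rw [mem_powerset] at hS
    rw [← Finset.sum_filter, Finset.filter_mem_eq_inter, Finset.inter_eq_right.2 hS, sum_mul, mul_sum]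
    refine sum_congr rfl fun a _ => by ring
  rw [sum_congr rfl h1, sum_comm, sum_mul]
  refine sum_congr rfl fun a ha => ?_
  obtain ⟨A', haA', rfl⟩ : ∃ A', a ∉ A' ∧ insert a A' = A :=
    ⟨A.erase a, by simp, insert_erase ha⟩
  rw [sum_powerset_insert haA']
  have h2 : ∀ S ∈ A'.powerset, (if a ∈ S then w a * (c ^ #S * W ^ (#(insert a A') - #S)) else 0) = 0 := by
    intro S hS
    rw [if_neg (fun h => haA' (mem_powerset.1 hS h))]
  rw [sum_congr rfl h2, sum_const_zero, zero_add, card_insert_of_notMem haA', Nat.add_sub_cancel,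
    ← sum_pow_mul_eq_add_pow, mul_sum, mul_sum]
  refine sum_congr rfl fun S hS => ?_
  have : a ∉ S := fun h => haA' (mem_powerset.1 hS h)
  rw [if_pos (mem_insert_self _ _), card_insert_of_notMem this, Nat.add_sub_add_right]
  ring

open Finset Classical in
theorem hgood_count {ι V : Type*} [Fintype ι] [Fintype V] [DecidableEq ι] [DecidableEq V]
    (B : ι → Finset V) (hB : ∀ a, (B a).Nonempty)
    (hd : ∀ a b v, v ∈ B a → v ∈ B b → a = b) (v0 : V) :
    ∀ (N : ℕ) (A : Finset ι) (R : Finset V), #A = N → Disjoint R (A.biUnion B) →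
    #({p | HGood B v0 A R p} : Finset (ι → V)) * (#R + ∑ a ∈ A, #(B a)) =
      #R * (#R + ∑ a ∈ A, #(B a)) ^ #A := by
  intro N
  induction N using Nat.strong_induction_on with
  | _ N ih =>
  intro A R hN hR
  rcases A.eq_empty_or_nonempty with rfl | hA
  · have : ({p | HGood B v0 ∅ R p} : Finset (ι → V)) = {fun _ => v0} := by
      ext p
      rw [mem_filter, mem_singleton]
      simp only [mem_univ, true_and, HGood]
      constructor
      · rintro ⟨-, h, -⟩
        funext a
        exact h a (by simp)
      · rintro rfl
        refine ⟨by simp, by simp, ?_⟩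
        intro S hS hne
        rw [subset_empty.1 hS] at hne
        simp at hne
    rw [this]
    simp
  set W := ∑ a ∈ A, #(B a) with hW
  have hWpos : 0 < W := by
    obtain ⟨a, ha⟩ := hA
    exact lt_of_lt_of_le (card_pos.2 (hB a)) (single_le_sum (f := fun a => #(B a)) (fun _ _ => Nat.zero_le _) ha)
  have hcard : ∀ S : Finset ι, #(S.biUnion B) = ∑ a ∈ S, #(B a) := by
    intro S
    refine card_biUnion ?_
    intro a _ b _ hab
    exact Finset.disjoint_left.2 fun v h1 h2 => hab (hd a b v h1 h2)
  have hmain : #({p | HGood B v0 A R p} : Finset (ι → V)) * W = W * (#R * (#R + W) ^ (#A - 1)) := by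
    rw [card_eq_sum_card_fiberwise (f := fun p => {a ∈ A | p a ∈ R}) (t := A.powerset)
      (fun p _ => mem_coe.2 (mem_powerset.2 (filter_subset _ _))), sum_mul, hW, ← hgood_sum (fun a => #(B a)) A hA, ← hW]
    refine sum_congr rfl fun S hS => ?_
    rw [mem_powerset] at hS
    rw [hgood_fiber B v0 A R hR S hS]
    rcases S.eq_empty_or_nonempty with rfl | hSne
    · have : ({p | HGood B v0 (A \ ∅) ((∅ : Finset ι).biUnion B) p} : Finset (ι → V)) = ∅ := by
        rw [filter_eq_empty_iff]
        rintro p - ⟨h1, h2, h3⟩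
        simp only [sdiff_empty, biUnion_empty, empty_union] at h1 h3
        obtain ⟨a, ha, h⟩ := h3 A Subset.rfl hA
        exact h (h1 a ha)
      rw [this]; simp
    · have hlt : #(A \ S) < N := by
        rw [← hN]
        exact card_lt_card (sdiff_ssubset hS hSne)
      have := ih _ hlt (A \ S) (S.biUnion B) rfl (by
        rw [Finset.disjoint_left]
        intro v h1 h2
        rw [mem_biUnion] at h1 h2
        obtain ⟨a, ha, hva⟩ := h1
        obtain ⟨b, hb, hvb⟩ := h2
        rw [hd a b v hva hvb] at ha
        exact (mem_sdiff.1 hb).2 ha)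
      rw [hcard, add_comm, sum_sdiff hS, card_sdiff_of_subset hS] at this
      rw [mul_assoc, this]
  rw [mul_comm _ W] at hmain
  have := Nat.eq_of_mul_eq_mul_left hWpos hmain
  rw [this, mul_assoc, ← pow_succ, Nat.sub_add_cancel (card_pos.2 hA)]

theorem fin_cyc {m : ℕ} (a : Fin (m + 1)) (Q : Fin (m + 1) → Prop) (h0 : Q (a + 1))
    (hs : ∀ j, j ≠ a → j + 1 ≠ a → Q j → Q (j + 1)) : ∀ j, j ≠ a → Q j := by
  have key : ∀ t : ℕ, t < m → Q (a + 1 + (Fin.ofNat (m+1) t)) := by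
    intro t
    induction t with
    | zero => intro _; simpa using h0
    | succ t ih =>
      intro ht
      have h1 := ih (by omega)
      have e : a + 1 + Fin.ofNat (m+1) (t+1) = a + 1 + Fin.ofNat (m+1) t + 1 := by
        rw [add_assoc (a+1)]
        congr 1
        ext
        simp [Fin.val_add]
      have ne : ∀ s : ℕ, s < m → a + 1 + Fin.ofNat (m+1) s ≠ a := by
        intro s hs h
        rw [add_assoc] at h
        have h2 : (1 : Fin (m+1)) + Fin.ofNat (m+1) s = 0 := by simpa using h
        have h3 := congrArg Fin.val h2
        simp only [Fin.val_add, Fin.val_ofNat, Fin.val_zero, Fin.val_one', Nat.add_mod_mod, Nat.mod_add_mod] at h3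
        rw [Nat.mod_eq_of_lt (by omega)] at h3
        omega
      rw [e]
      refine hs _ (ne t (by omega)) ?_ h1
      rw [← e]; exact ne _ ht
  intro j hj
  have h := key (j - (a + 1)).val (by
    have h1 := (j - (a+1)).isLt
    by_contra hcon
    have h2 : (j - (a+1)).val = m := by omega
    have h3 : j - (a + 1) = Fin.last m := Fin.ext (by simpa using h2)
    apply hj
    have h4 : j = Fin.last m + (a + 1) := by rw [← h3]; simp
    rw [h4, add_comm a 1, ← add_assoc, Fin.last_add_one, zero_add])
  have e2 : Fin.ofNat (m+1) (j - (a + 1)).val = j - (a+1) := by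
    ext; simp
  rw [e2] at h
  simpa using h

/-- cut lemma -/
theorem cut_lemma {V : Type*} {m : ℕ} (v : Fin (m + 1) → V) (D : Set V) (x : V) (hx : x ∉ D)
    (h1 : ∀ j, v j ∈ D → v (j + 1) ∈ D ∨ v (j + 1) = x)
    (h2 : ∀ j, v (j + 1) ∈ D → v j ∈ D ∨ v j = x) (hv : Function.Injective v)
    (i : Fin (m + 1)) (hi : v i ∈ D) : ∀ j, v j ∈ D ∨ v j = x := by
  by_cases hex : ∃ a, v a = x
  · obtain ⟨a, rfl⟩ := hex
    have hia : i ≠ a := by rintro rfl; exact hx hi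
    have inj : ∀ j, v j = v a ↔ j = a := fun j => hv.eq_iff
    simp only [inj] at *
    by_cases h0 : v (a + 1) ∈ D
    · intro j
      by_cases hj : j = a
      · exact Or.inr hj
      · refine Or.inl (fin_cyc a (fun j => v j ∈ D) h0 ?_ j hj)
        intro j _ hj1 hj2
        exact (h1 j hj2).resolve_right hj1
    · exfalso
      refine fin_cyc a (fun j => v j ∉ D) h0 ?_ i hia hi
      intro j hj _ hj2 hj3
      exact hj2 ((h2 j hj3).resolve_right hj)
  · push Not at hex
    intro j
    left
    by_cases hj : j = i
    · rw [hj]; exact hi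
    · refine fin_cyc i (fun j => v j ∈ D) ((h1 i hi).resolve_right (hex _)) ?_ j hj
      intro j _ _ hj2
      exact (h1 j hj2).resolve_right (hex _)

/-- Rooted block structure. -/
structure HRoot {ι V : Type*} (r : V) (B : ι → Finset V) (p : ι → V) : Prop where
  ne : ∀ a, (B a).Nonempty
  disj : ∀ a b v, v ∈ B a → v ∈ B b → a = b
  root : ∀ a, r ∉ B a
  cov : ∀ v, v ≠ r → ∃ a, v ∈ B a
  ac : ∀ S : Finset ι, S.Nonempty → ∃ a ∈ S, ∀ b ∈ S, p a ∉ B b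

section
variable {ι V : Type*} [DecidableEq V] {r : V} {B : ι → Finset V} {p : ι → V}

theorem HRoot.self (h : HRoot r B p) (a : ι) : p a ∉ B a := by
  obtain ⟨b, hb, h1⟩ := h.ac {a} (by simp)
  rw [Finset.mem_singleton] at hb
  subst hb
  exact h1 b (by simp)

theorem HRoot.two (h : HRoot r B p) (a b : ι) (h1 : p a ∈ B b) (h2 : p b ∈ B a) : False := by
  classical
  obtain ⟨c, hc, h3⟩ := h.ac {a, b} (by simp)
  simp only [Finset.mem_insert, Finset.mem_singleton, forall_eq_or_imp, forall_eq] at hc h3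
  rcases hc with rfl | rfl
  · exact h3.2 h1
  · exact h3.1 h2

theorem HRoot.inter (h : HRoot r B p) (a b : ι) (hab : a ≠ b) :
    (insert (p a) (B a) ∩ insert (p b) (B b)).card ≤ 1 := by
  rw [Finset.card_le_one]
  have key : ∀ x ∈ insert (p a) (B a) ∩ insert (p b) (B b), 
      (x = p a ∧ x = p b) ∨ (x = p a ∧ x ∈ B b) ∨ (x = p b ∧ x ∈ B a) := by
    intro x hx
    simp only [Finset.mem_inter, Finset.mem_insert] at hx
    have := h.disj a b x
    tauto
  intro x hx y hy
  have t := h.two a b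
  have s := h.self a
  have s' := h.self b
  rcases key x hx with ⟨h1, h2⟩ | ⟨h1, h2⟩ | ⟨h1, h2⟩ <;>
  rcases key y hy with ⟨h3, h4⟩ | ⟨h3, h4⟩ | ⟨h3, h4⟩ <;> grind

theorem HRoot.inj (h : HRoot r B p) : Function.Injective (fun a => insert (p a) (B a)) := by
  intro a b hab
  by_contra hne
  have h1 := h.inter a b hne
  have h2 : insert (p a) (B a) = insert (p b) (B b) := hab
  rw [← h2, Finset.inter_self, Finset.card_insert_of_notMem (h.self a)] at h1
  have := (h.ne a).card_pos
  omega

theorem HRoot.conn [Fintype ι] (h : HRoot r B p) (E : Finset (Finset V))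
    (hE : ∀ e, e ∈ E ↔ ∃ a, insert (p a) (B a) = e) (v : V) :
    Relation.ReflTransGen (fun a b => a ≠ b ∧ ∃ e ∈ E, a ∈ e ∧ b ∈ e) v r := by
  classical
  set rel := fun a b : V => a ≠ b ∧ ∃ e ∈ E, a ∈ e ∧ b ∈ e with hrel
  by_contra hcon
  have hvr : v ≠ r := by rintro rfl; exact hcon .refl
  obtain ⟨a, ha⟩ := h.cov v hvr
  obtain ⟨b, hb, hb2⟩ := h.ac (Finset.univ.filter fun b => ∃ v ∈ B b, ¬ Relation.ReflTransGen rel v r)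
    ⟨a, by simpa using ⟨v, ha, hcon⟩⟩
  simp only [Finset.mem_filter, Finset.mem_univ, true_and] at hb hb2
  obtain ⟨w, hw, hwr⟩ := hb
  have h1 : Relation.ReflTransGen rel (p b) r := by
    by_cases hp : p b = r
    · rw [hp]
    · obtain ⟨c, hc⟩ := h.cov _ hp
      by_contra h2
      exact hb2 c ⟨_, hc, h2⟩ hc
  apply hwr
  refine Relation.ReflTransGen.head ⟨?_, insert (p b) (B b), (hE _).2 ⟨b, rfl⟩, ?_, ?_⟩ h1
  · rintro rfl
    exact h.self b hw
  · simp [hw]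
  · simp

theorem HRoot.cyc [Fintype ι] (h : HRoot r B p) (E : Finset (Finset V))
    (hE : ∀ e, e ∈ E ↔ ∃ a, insert (p a) (B a) = e) (k : ℕ) (v : Fin (k + 3) → V)
    (hv : Function.Injective v) (hs : ∀ j, ∃ e ∈ E, v j ∈ e ∧ v (j + 1) ∈ e) :
    ∃ e ∈ E, ∀ j, v j ∈ e := by
  classical
  let A : Finset ι := Finset.univ.filter fun b => ∃ j, v j ∈ B b
  have hA : A.Nonempty := by
    have : ∃ j, v j ≠ r := by
      by_contra hcon
      push Not at hcon
      have := hv ((hcon 0).trans (hcon 1).symm)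
      simp [Fin.ext_iff] at this
    obtain ⟨j, hj⟩ := this
    obtain ⟨b, hb⟩ := h.cov _ hj
    exact ⟨b, by simpa [A] using ⟨j, hb⟩⟩
  -- leaf
  have hleaf : ∃ b ∈ A, ∀ c ∈ A, p c ∉ B b := by
    by_contra hcon
    push Not at hcon
    choose! f hf1 hf2 using hcon
    have hinj : Set.InjOn f A := by
      intro b hb c hc hbc
      have h1 := hf2 b hb
      rw [hbc] at h1
      exact h.disj _ _ _ h1 (hf2 c hc)
    have hsurj := Finset.surj_on_of_inj_on_of_card_le (s := A) (t := A) (fun a _ => f a) (fun a ha => hf1 a ha)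
      (fun a b ha hb hab => hinj ha hb hab) le_rfl
    obtain ⟨a, ha, ha2⟩ := h.ac A hA
    obtain ⟨b, hb, hab⟩ := hsurj a ha
    refine ha2 b hb ?_
    rw [hab]; exact hf2 b hb
  obtain ⟨b, hb, hbl⟩ := hleaf
  have hb' : ∃ j, v j ∈ B b := by simpa [A] using hb
  obtain ⟨i, hi⟩ := hb'
  have step : ∀ j j', v j ≠ v j' → (∃ e ∈ E, v j ∈ e ∧ v j' ∈ e) → v j ∈ B b → v j' ∈ B b ∨ v j' = p b := by
    rintro j j' hne ⟨e, he, h1, h2⟩ hj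
    obtain ⟨c, rfl⟩ := (hE e).1 he
    rw [Finset.mem_insert] at h1 h2
    rcases h1 with h1 | h1
    · exfalso
      rcases h2 with h2 | h2
      · exact hne (h1.trans h2.symm)
      · refine hbl c (by simpa [A] using ⟨j', h2⟩) ?_
        rw [← h1]; exact hj
    · obtain rfl := h.disj _ _ _ h1 hj
      exact h2.symm
  have hjj : ∀ j : Fin (k+3), v j ≠ v (j + 1) := by
    intro j hj
    have := hv hj
    simp at this
  refine ⟨insert (p b) (B b), (hE _).2 ⟨b, rfl⟩, ?_⟩
  intro j
  have := cut_lemma v (B b : Set V) (p b) (by simpa using h.self b)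
    (fun j hj => by simpa using step j (j+1) (hjj j) (hs j) (by simpa using hj))
    (fun j hj => by
      obtain ⟨e, he, h1, h2⟩ := hs j
      simpa using step (j+1) j (hjj j).symm ⟨e, he, h2, h1⟩ (by simpa using hj)) hv i (by simpa using hi) j
  rw [Finset.mem_insert]
  simpa [or_comm] using this

theorem HRoot.uniq {ι' : Type*} [Fintype ι] {B' : ι' → Finset V} {p' : ι' → V}
    (h : HRoot r B p) (h' : HRoot r B' p')
    (h1 : ∀ a, ∃ a', insert (p a) (B a) = insert (p' a') (B' a')) (a : ι) (a' : ι')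
    (haa : insert (p a) (B a) = insert (p' a') (B' a')) : B a = B' a' := by
  classical
  choose f hf using h1
  have hp : ∀ a, p a = p' (f a) := by
    by_contra hcon
    push Not at hcon
    obtain ⟨a0, ha0⟩ := hcon
    obtain ⟨e, he, he2⟩ := h.ac (Finset.univ.filter fun a => p a ≠ p' (f a)) ⟨a0, by simpa using ha0⟩
    simp only [Finset.mem_filter, Finset.mem_univ, true_and] at he he2
    have h3 : p e ∈ B' (f e) := by
      have : p e ∈ insert (p' (f e)) (B' (f e)) := by rw [← hf]; simp
      rw [Finset.mem_insert] at this
      exact this.resolve_left he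
    have h4 : p e ≠ r := fun h5 => h'.root (f e) (h5 ▸ h3)
    obtain ⟨g, hg⟩ := h.cov _ h4
    have h5 : p g = p' (f g) := by
      by_contra hc
      exact he2 g hc hg
    have h6 : p e ∈ B' (f g) := by
      have : p e ∈ insert (p' (f g)) (B' (f g)) := by rw [← hf]; simp [hg]
      rw [Finset.mem_insert] at this
      refine this.resolve_left fun h7 => h.self g ?_
      rw [h5, ← h7]; exact hg
    have h7 := h'.disj _ _ _ h3 h6
    have h8 : e = g := h.inj (by simp only; rw [hf, hf, h7])
    subst h8
    exact he h5
  have h2 : a' = f a := h'.inj (by simp only; rw [← hf, haa])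
  subst h2
  have e1 : (insert (p a) (B a)).erase (p a) = B a := Finset.erase_insert (h.self a)
  rw [← e1, haa, hp a, Finset.erase_insert (h'.self _)]
end

section
variable {V : Type*} [DecidableEq V]

theorem hf_list_cycle (T : Hyperforest V) (l : List V) (hn : l.Nodup) (hl : 3 ≤ l.length)
    (hc : l.IsChain (fun a b => ∃ e ∈ T.edges, a ∈ e ∧ b ∈ e))
    (hlast : ∃ e ∈ T.edges, l[l.length - 1] ∈ e ∧ l[0] ∈ e) :
    ∃ e ∈ T.edges, ∀ x ∈ l, x ∈ e := by
  obtain ⟨k, hk⟩ : ∃ k, l.length = k + 3 := ⟨l.length - 3, by omega⟩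
  obtain ⟨e, he, h⟩ := T.cycles k (fun j => l[j.val]'(by omega)) (by
      intro i j hij
      exact Fin.ext ((hn.getElem_inj_iff).1 hij)) (by
      intro j
      by_cases hj : j = Fin.last _
      · subst hj
        simpa [hk] using hlast
      · have hj' : (j + 1).val = j.val + 1 := Fin.val_add_one_of_lt (Fin.lt_last_iff_ne_last.2 hj)
        simp only [hj']
        have := List.isChain_iff_getElem.1 hc j.val (by
          have := Fin.lt_last_iff_ne_last.2 hj
          have := Fin.lt_def.1 this
          simp at this
          omega)
        exact this)
  refine ⟨e, he, ?_⟩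
  intro x hx
  obtain ⟨i, hi, rfl⟩ := List.getElem_of_mem hx
  exact h ⟨i, by omega⟩

/-- properties of the distance to the root -/
structure HDist (E : Finset (Finset V)) (r : V) (d : V → ℕ) : Prop where
  zero : ∀ v, d v = 0 → v = r
  root : d r = 0
  step : ∀ e ∈ E, ∀ a ∈ e, ∀ b ∈ e, d a ≤ d b + 1
  down : ∀ v m, d v = m + 1 → ∃ u, d u = m ∧ ∃ e ∈ E, v ∈ e ∧ u ∈ e

theorem hdist_exists (T : Hyperforest V) (hT : HFConnected T) (r : V) :
    ∃ d, HDist T.edges r d := by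
  let G : SimpleGraph V :=
    { Adj := fun a b => a ≠ b ∧ ∃ e ∈ T.edges, a ∈ e ∧ b ∈ e
      symm := ⟨fun a b ⟨h, e, he, h1, h2⟩ => ⟨h.symm, e, he, h2, h1⟩⟩
      loopless := ⟨fun a h => h.1 rfl⟩ }
  have hG : G.Connected := by
    haveI : Nonempty V := ⟨r⟩
    refine ⟨fun u v => ?_⟩
    rw [SimpleGraph.reachable_iff_reflTransGen]
    exact hT u v
  refine ⟨fun v => G.dist v r, ?_, ?_, ?_, ?_⟩
  · intro v hv
    exact hG.dist_eq_zero_iff.1 hv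
  · simp
  · intro e he a ha b hb
    by_cases hab : a = b
    · subst hab; omega
    · have h1 : G.Adj a b := ⟨hab, e, he, ha, hb⟩
      have h2 := hG.dist_triangle (u := a) (v := b) (w := r)
      have h3 := SimpleGraph.dist_eq_one_iff_adj.2 h1
      omega
  · intro v m hv
    obtain ⟨w, hw⟩ := hG.exists_walk_length_eq_dist v r
    cases w with
    | nil => simp at hv
    | @cons _ u _ hadj w' =>
      refine ⟨u, ?_, hadj.2⟩
      have h1 := SimpleGraph.dist_le w'
      have h2 := hG.dist_triangle (u := v) (v := u) (w := r)
      have h3 := SimpleGraph.dist_eq_one_iff_adj.2 hadj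
      simp only [SimpleGraph.Walk.length_cons] at hw
      omega

theorem hdist_path {E : Finset (Finset V)} {r : V} {d : V → ℕ} (hd : HDist E r d) :
    ∀ (m : ℕ) (x y : V), x ≠ y → d x = m → d y = m →
    ∃ l : List V, l ≠ [] ∧ l.Nodup ∧ (∀ z ∈ l, d z < m) ∧
      (x :: (l ++ [y])).IsChain (fun a b => ∃ e ∈ E, a ∈ e ∧ b ∈ e) := by
  intro m
  induction m with
  | zero =>
    intro x y hxy hx hy
    exact absurd ((hd.zero x hx).trans (hd.zero y hy).symm) hxy
  | succ m ih =>
    intro x y hxy hx hy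
    obtain ⟨x', hx', hxx⟩ := hd.down x m hx
    obtain ⟨y', hy', e, he, h1, h2⟩ := hd.down y m hy
    by_cases h : x' = y'
    · subst h
      refine ⟨[x'], by simp, by simp, by simp [hx'], ?_⟩
      simp only [List.singleton_append, List.isChain_cons_cons, List.isChain_singleton, and_true]
      exact ⟨hxx, e, he, h2, h1⟩
    · obtain ⟨l, hl1, hl2, hl3, hl4⟩ := ih x' y' h hx' hy'
      refine ⟨x' :: (l ++ [y']), by simp, ?_, ?_, ?_⟩
      · have hxl : x' ∉ l := fun h => by have := hl3 _ h; omega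
        have hyl : y' ∉ l := fun h => by have := hl3 _ h; omega
        rw [List.nodup_cons, List.nodup_append]
        refine ⟨by simp [hxl, h], hl2, by simp, ?_⟩
        intro a ha b hb
        simp only [List.mem_singleton] at hb
        subst hb
        rintro rfl
        exact hyl ha
      · intro z hz
        simp only [List.mem_cons, List.mem_append, List.not_mem_nil, or_false] at hz
        rcases hz with rfl | hz | rfl
        · omega
        · have := hl3 z hz; omega
        · omega
      · rw [List.cons_append, List.isChain_cons_cons]
        refine ⟨hxx, ?_⟩
        rw [← List.cons_append, List.isChain_append]
        refine ⟨hl4, by simp, ?_⟩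
        intro a ha b hb
        rw [← List.cons_append, List.getLast?_concat] at ha
        simp at ha hb
        subst ha hb
        exact ⟨e, he, h2, h1⟩

theorem hf_same {T : Hyperforest V} {e f : Finset V} (he : e ∈ T.edges) (hf : f ∈ T.edges)
    {x y : V} (hxy : x ≠ y) (h1 : x ∈ e) (h2 : x ∈ f) (h3 : y ∈ e) (h4 : y ∈ f) : e = f := by
  by_contra h
  have := T.inter e he f hf h
  rw [Finset.card_le_one] at this
  exact hxy (this x (by simp [h1, h2]) y (by simp [h3, h4]))

theorem hdist_min {T : Hyperforest V} {r : V} {d : V → ℕ} (hd : HDist T.edges r d)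
    {e : Finset V} (he : e ∈ T.edges) {x y : V} (hx : x ∈ e) (hy : y ∈ e) (hxy : d x = d y)
    (hmin : ∀ z ∈ e, d x ≤ d z) : x = y := by
  by_contra hne
  obtain ⟨l, hl1, hl2, hl3, hl4⟩ := hdist_path hd (d x) x y hne rfl hxy.symm
  have hxl : x ∉ l := fun h => by have := hl3 _ h; omega
  have hyl : y ∉ l := fun h => by have := hl3 _ h; omega
  have hpos := List.length_pos_iff.2 hl1
  obtain ⟨f, hf, hall⟩ := hf_list_cycle T (x :: (l ++ [y])) (by
      rw [List.nodup_cons, List.nodup_append]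
      refine ⟨by simp [hxl, hne], hl2, by simp, ?_⟩
      intro a ha b hb
      simp only [List.mem_singleton] at hb
      subst hb
      rintro rfl
      exact hyl ha) (by simp; omega) hl4 ⟨e, he, by simpa using hy, by simpa using hx⟩
  have hfe : e = f := hf_same he hf hne hx (hall x (by simp)) hy (hall y (by simp))
  subst hfe
  obtain ⟨z, hz⟩ := List.exists_mem_of_ne_nil l hl1
  have h1 := hl3 z hz
  have h2 := hmin z (hall z (by simp [hz]))
  omega

theorem hdist_parent {T : Hyperforest V} {r : V} {d : V → ℕ} (hd : HDist T.edges r d)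
    {e f : Finset V} (he : e ∈ T.edges) (hf : f ∈ T.edges) {v x y : V} (hve : v ∈ e) (hvf : v ∈ f)
    (hx : x ∈ e) (hy : y ∈ f) (hxv : d x < d v) (hyv : d y < d v) : e = f := by
  have h1 := hd.step e he v hve x hx
  have h2 := hd.step f hf v hvf y hy
  have hvx : v ≠ x := by rintro rfl; omega
  have hvy : v ≠ y := by rintro rfl; omega
  by_cases hne : x = y
  · subst hne
    exact hf_same he hf hvx hve hvf hx hy
  obtain ⟨l, hl1, hl2, hl3, hl4⟩ := hdist_path hd (d x) x y hne rfl (by omega)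
  have hxl : x ∉ l := fun h => by have := hl3 _ h; omega
  have hyl : y ∉ l := fun h => by have := hl3 _ h; omega
  have hvl : v ∉ l := fun h => by have := hl3 _ h; omega
  obtain ⟨g, hg, hall⟩ := hf_list_cycle T (v :: x :: (l ++ [y])) (by
      rw [List.nodup_cons, List.nodup_cons, List.nodup_append]
      refine ⟨by simp [hvl, hvx, hvy], by simp [hxl, hne], hl2, by simp, ?_⟩
      intro a ha b hb
      simp only [List.mem_singleton] at hb
      subst hb
      rintro rfl
      exact hyl ha) (by simp) (by
      rw [List.isChain_cons_cons]
      exact ⟨⟨e, he, hve, hx⟩, hl4⟩) ⟨f, hf, by simpa using hy, by simpa using hvf⟩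
  have e1 : e = g := hf_same he hg hvx hve (hall v (by simp)) hx (hall x (by simp))
  have e2 : f = g := hf_same hf hg hvy hvf (hall v (by simp)) hy (hall y (by simp))
  rw [e1, e2]

theorem hf_rooted (T : Hyperforest V) (hT : HFConnected T) (r : V) :
    ∃ q : T.edges → V, (∀ e, q e ∈ e.1) ∧ HRoot r (fun e : T.edges => e.1.erase (q e)) q := by
  obtain ⟨d, hd⟩ := hdist_exists T hT r
  have hne : ∀ e : T.edges, e.1.Nonempty := fun e =>
    Finset.card_pos.1 (by have := T.two_le e.1 e.2; omega)
  choose q hq1 hq2 using fun e : T.edges => Finset.exists_min_image e.1 d (hne e)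
  have hlt : ∀ (e : T.edges), ∀ v ∈ e.1.erase (q e), d (q e) < d v := by
    intro e v hv
    rw [Finset.mem_erase] at hv
    refine lt_of_le_of_ne (hq2 e v hv.2) fun h => hv.1 ?_
    exact (hdist_min hd e.2 (hq1 e) hv.2 h (hq2 e)).symm
  refine ⟨q, hq1, ?_, ?_, ?_, ?_, ?_⟩
  · intro e
    rw [← Finset.card_pos, Finset.card_erase_of_mem (hq1 e)]
    have := T.two_le e.1 e.2
    omega
  · intro e f v he hf
    exact Subtype.ext (hdist_parent hd e.2 f.2 (Finset.mem_of_mem_erase he) (Finset.mem_of_mem_erase hf)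
      (hq1 e) (hq1 f) (hlt e v he) (hlt f v hf))
  · intro e he
    have := hlt e r he
    rw [hd.root] at this
    omega
  · intro v hv
    obtain ⟨m, hm⟩ : ∃ m, d v = m + 1 :=
      Nat.exists_eq_succ_of_ne_zero (fun h => hv (hd.zero v h))
    obtain ⟨u, hu, e, he, h1, h2⟩ := hd.down v m hm
    refine ⟨⟨e, he⟩, ?_⟩
    rw [Finset.mem_erase]
    refine ⟨?_, h1⟩
    intro h
    have := hq2 ⟨e, he⟩ u h2
    rw [← h] at this
    omega
  · intro S hS
    obtain ⟨e, he, hmin⟩ := Finset.exists_min_image S (fun e => d (q e)) hS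
    refine ⟨e, he, fun f hf h => ?_⟩
    have h1 := hlt f _ h
    have h2 := hmin f hf
    omega
end

/-- the blocks of a partition, seen in `Fin (m + 1)` -/
def HB {m : ℕ} (P : Finpartition (Finset.univ : Finset (Fin m))) (b : P.parts) :
    Finset (Fin (m + 1)) := b.1.map Fin.castSuccEmb

theorem HB_ne {m : ℕ} (P : Finpartition (Finset.univ : Finset (Fin m))) (b : P.parts) :
    (HB P b).Nonempty := by
  simpa [HB] using P.nonempty_of_mem_parts b.2

theorem HB_disj {m : ℕ} (P : Finpartition (Finset.univ : Finset (Fin m))) (a b : P.parts)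
    (v : Fin (m + 1)) (ha : v ∈ HB P a) (hb : v ∈ HB P b) : a = b := by
  simp only [HB, Finset.mem_map] at ha hb
  obtain ⟨x, hx, rfl⟩ := ha
  obtain ⟨y, hy, hxy⟩ := hb
  obtain rfl := Fin.castSuccEmb.injective hxy
  exact Subtype.ext (P.eq_of_mem_parts a.2 b.2 hx hy)

theorem HB_root {m : ℕ} (P : Finpartition (Finset.univ : Finset (Fin m))) (b : P.parts) :
    Fin.last m ∉ HB P b := by
  intro h
  simp only [HB, Finset.mem_map] at h
  obtain ⟨x, _, hx⟩ := h
  exact (Fin.castSucc_lt_last x).ne hx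

theorem HB_cov {m : ℕ} (P : Finpartition (Finset.univ : Finset (Fin m)))
    (v : Fin (m + 1)) (hv : v ≠ Fin.last m) : ∃ b, v ∈ HB P b := by
  obtain ⟨x, rfl⟩ := Fin.exists_castSucc_eq.2 hv
  obtain ⟨b, hb, hx⟩ := P.exists_mem (Finset.mem_univ x)
  exact ⟨⟨b, hb⟩, by simpa [HB] using hx⟩

open Finset Classical in
theorem HB_count {m : ℕ} (P : Finpartition (Finset.univ : Finset (Fin m))) (k : ℕ)
    (hk : 1 ≤ k) (hP : #P.parts = k) :
    Nat.card {p : P.parts → Fin (m + 1) // HRoot (Fin.last m) (HB P) p} = (m + 1) ^ (k - 1) := by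
  have hiff : ∀ p : P.parts → Fin (m + 1), HRoot (Fin.last m) (HB P) p ↔
      HGood (HB P) (Fin.last m) Finset.univ {Fin.last m} p := by
    intro p
    constructor
    · intro h
      refine ⟨?_, ?_, ?_⟩
      · intro a _
        by_cases ha : p a = Fin.last m
        · simp [ha]
        · obtain ⟨b, hb⟩ := h.cov _ ha
          exact mem_union_right _ (mem_biUnion.2 ⟨b, mem_univ _, hb⟩)
      · intro a ha
        exact absurd (mem_univ a) ha
      · intro S _ hS
        obtain ⟨a, ha, h1⟩ := h.ac S hS
        refine ⟨a, ha, fun h2 => ?_⟩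
        obtain ⟨b, hb, h3⟩ := mem_biUnion.1 h2
        exact h1 b hb h3
    · rintro ⟨-, -, h⟩
      refine ⟨HB_ne P, HB_disj P, HB_root P, HB_cov P, ?_⟩
      intro S hS
      obtain ⟨a, ha, h1⟩ := h S (subset_univ _) hS
      exact ⟨a, ha, fun b hb h2 => h1 (mem_biUnion.2 ⟨b, hb, h2⟩)⟩
  have h1 := hgood_count (HB P) (HB_ne P) (HB_disj P) (Fin.last m) _ univ {Fin.last m} rfl (by
    rw [disjoint_singleton_left]
    intro h
    obtain ⟨b, _, hb⟩ := mem_biUnion.1 h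
    exact HB_root P b hb)
  have hsum : ∑ a : P.parts, #(HB P a) = m := by
    have := P.sum_card_parts
    simp only [card_univ, Fintype.card_fin] at this
    rw [← Finset.sum_coe_sort P.parts] at this
    simpa [HB] using this
  have hc : #(univ : Finset P.parts) = k := by
    rw [card_univ, Fintype.card_coe, hP]
  rw [hsum, card_singleton, one_mul, hc] at h1
  have h2 : Nat.card {p : P.parts → Fin (m + 1) // HRoot (Fin.last m) (HB P) p} =
      #({p | HGood (HB P) (Fin.last m) Finset.univ {Fin.last m} p} : Finset (P.parts → Fin (m + 1))) := by
    rw [Nat.card_eq_fintype_card, Fintype.card_subtype]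
    congr 1
    ext p
    rw [mem_filter, mem_filter, hiff]
  rw [h2]
  obtain ⟨j, rfl⟩ : ∃ j, k = j + 1 := ⟨k - 1, by omega⟩
  rw [pow_succ] at h1
  have := Nat.eq_of_mul_eq_mul_right (by omega) h1
  rw [this, add_comm 1 m, Nat.add_sub_cancel]

/-- the hypertree of a rooted block structure -/
def HRoot.toHF {ι V : Type*} [DecidableEq V] [Fintype ι] {r : V} {B : ι → Finset V} {p : ι → V}
    (h : HRoot r B p) : Hyperforest V where
  edges := Finset.univ.image (fun a => insert (p a) (B a))
  two_le := by
    intro e he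
    obtain ⟨a, _, rfl⟩ := Finset.mem_image.1 he
    rw [Finset.card_insert_of_notMem (h.self a)]
    have := (h.ne a).card_pos
    omega
  inter := by
    intro e he f hf hne
    obtain ⟨a, _, rfl⟩ := Finset.mem_image.1 he
    obtain ⟨b, _, rfl⟩ := Finset.mem_image.1 hf
    exact h.inter a b (by rintro rfl; exact hne rfl)
  cycles := fun k v hv hs => h.cyc _ (by simp) k v hv hs

theorem HRoot.toHF_conn {ι V : Type*} [DecidableEq V] [Fintype ι] {r : V} {B : ι → Finset V}
    {p : ι → V} (h : HRoot r B p) : HFConnected h.toHF := by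
  intro u v
  have h1 := h.conn h.toHF.edges (by simp [HRoot.toHF])
  refine (h1 u).trans ?_
  have hsy : ∀ w, Relation.ReflTransGen
      (fun a b => a ≠ b ∧ ∃ e ∈ h.toHF.edges, a ∈ e ∧ b ∈ e) v w →
      Relation.ReflTransGen (fun a b => a ≠ b ∧ ∃ e ∈ h.toHF.edges, a ∈ e ∧ b ∈ e) w v := by
    intro w hw
    induction hw with
    | refl => exact .refl
    | tail _ hbc ih =>
      obtain ⟨hne, e, he, h3, h4⟩ := hbc
      exact .head ⟨hne.symm, e, he, h4, h3⟩ ih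
  exact hsy r (h1 v)

theorem HRoot.toHF_card {ι V : Type*} [DecidableEq V] [Fintype ι] {r : V} {B : ι → Finset V}
    {p : ι → V} (h : HRoot r B p) : h.toHF.edges.card = Fintype.card ι := by
  simp only [HRoot.toHF]
  rw [Finset.card_image_of_injective _ h.inj, Finset.card_univ]

theorem Hyperforest.ext' {V : Type*} [DecidableEq V] {T T' : Hyperforest V}
    (h : T.edges = T'.edges) : T = T' := by
  cases T; cases T'; simp only at h; subst h; rfl

/-- the encoding of hypertrees -/
def hmap (m k : ℕ) (x : Σ P : {P : Finpartition (Finset.univ : Finset (Fin m)) // P.parts.card = k},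
      {p : P.1.parts → Fin (m + 1) // HRoot (Fin.last m) (HB P.1) p}) :
    {T : Hyperforest (Fin (m + 1)) // HFConnected T ∧ T.edges.card = k} :=
  ⟨x.2.2.toHF, x.2.2.toHF_conn, by rw [x.2.2.toHF_card, Fintype.card_coe, x.1.2]⟩

theorem hmap_inj (m k : ℕ) : Function.Injective (hmap m k) := by
  rintro ⟨⟨P, hP⟩, ⟨p, hp⟩⟩ ⟨⟨P', hP'⟩, ⟨p', hp'⟩⟩ h
  have he : hp.toHF.edges = hp'.toHF.edges := congrArg (fun T => T.1.edges) h
  have h1 : ∀ a, ∃ a', insert (p a) (HB P a) = insert (p' a') (HB P' a') := by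
    intro a
    have : insert (p a) (HB P a) ∈ hp.toHF.edges := by simp [HRoot.toHF]
    rw [he] at this
    simp only [HRoot.toHF, Finset.mem_image, Finset.mem_univ, true_and] at this
    obtain ⟨a', h⟩ := this
    exact ⟨a', h.symm⟩
  have h2 : ∀ a', ∃ a, insert (p' a') (HB P' a') = insert (p a) (HB P a) := by
    intro a
    have : insert (p' a) (HB P' a) ∈ hp'.toHF.edges := by simp [HRoot.toHF]
    rw [← he] at this
    simp only [HRoot.toHF, Finset.mem_image, Finset.mem_univ, true_and] at this
    obtain ⟨a', h⟩ := this
    exact ⟨a', h.symm⟩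
  have hPP : P = P' := by
    apply Finpartition.ext
    ext b
    constructor
    · intro hb
      obtain ⟨a', ha'⟩ := h1 ⟨b, hb⟩
      have := hp.uniq hp' h1 _ _ ha'
      simp only [HB, Finset.map_inj] at this
      rw [this]; exact a'.2
    · intro hb
      obtain ⟨a', ha'⟩ := h2 ⟨b, hb⟩
      have := hp'.uniq hp h2 _ _ ha'
      simp only [HB, Finset.map_inj] at this
      rw [this]; exact a'.2
  subst hPP
  have hpp : p = p' := by
    funext a
    obtain ⟨a', ha'⟩ := h1 a
    have h3 := hp.uniq hp' h1 _ _ ha'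
    have h4 : a = a' := by
      simp only [HB, Finset.map_inj] at h3
      exact Subtype.ext h3
    subst h4
    have h5 : p a ∈ insert (p' a) (HB P a) := by rw [← ha']; simp
    exact (Finset.mem_insert.1 h5).resolve_right (hp.self a)
  subst hpp
  rfl

theorem hmap_surj (m k : ℕ) : Function.Surjective (hmap m k) := by
  classical
  rintro ⟨T, hT, hk⟩
  obtain ⟨q, hq, hR⟩ := hf_rooted T hT (Fin.last m)
  let g : T.edges → Finset (Fin m) := fun e =>
    Finset.univ.filter fun i => i.castSucc ∈ e.1.erase (q e)
  have hg : ∀ e, (g e).map Fin.castSuccEmb = e.1.erase (q e) := by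
    intro e
    ext v
    simp only [g, Finset.mem_map, Finset.mem_filter, Finset.mem_univ, true_and]
    constructor
    · rintro ⟨i, hi, rfl⟩; exact hi
    · intro hv
      have : v ≠ Fin.last m := by rintro rfl; exact hR.root e hv
      obtain ⟨x, rfl⟩ := Fin.exists_castSucc_eq.2 this
      exact ⟨x, hv, rfl⟩
  have hmem : ∀ e i, i ∈ g e ↔ i.castSucc ∈ e.1.erase (q e) := by
    intro e i; simp [g]
  have hgne : ∀ e, (g e).Nonempty := by
    intro e
    have := hR.ne e
    rw [← hg] at this
    simpa using this
  have hginj : Function.Injective g := by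
    intro e f hef
    obtain ⟨i, hi⟩ := hgne e
    have hi' := hi
    rw [hef] at hi'
    exact hR.disj e f _ ((hmem e i).1 hi) ((hmem f i).1 hi')
  let P : Finpartition (Finset.univ : Finset (Fin m)) :=
    Finpartition.ofExistsUnique (Finset.univ.image g) (fun _ _ => Finset.subset_univ _) (by
      intro i _
      obtain ⟨e, he⟩ := hR.cov i.castSucc (Fin.castSucc_lt_last i).ne
      refine ⟨g e, ⟨by simp, (hmem e i).2 he⟩, ?_⟩
      rintro t ⟨ht, hit⟩
      obtain ⟨f, _, rfl⟩ := Finset.mem_image.1 ht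
      rw [hR.disj f e _ ((hmem f i).1 hit) he]) (by
      intro h
      obtain ⟨e, _, he⟩ := Finset.mem_image.1 h
      exact (hgne e).ne_empty he)
  have hPparts : P.parts = Finset.univ.image g := rfl
  have hPcard : P.parts.card = k := by
    rw [hPparts, Finset.card_image_of_injective _ hginj, Finset.card_univ, Fintype.card_coe, hk]
  have hex : ∀ b : P.parts, ∃ e, g e = b.1 := by
    intro b
    have hb : b.1 ∈ Finset.univ.image g := b.2
    obtain ⟨e, _, he⟩ := Finset.mem_image.1 hb
    exact ⟨e, he⟩
  choose s hs using hex
  have hsB : ∀ b, HB P b = (s b).1.erase (q (s b)) := by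
    intro b
    rw [HB, ← hs b, hg]
  have hp : HRoot (Fin.last m) (HB P) (fun b => q (s b)) := by
    refine ⟨HB_ne P, HB_disj P, HB_root P, HB_cov P, ?_⟩
    intro S hS
    obtain ⟨e, he, h1⟩ := hR.ac (S.image s) (hS.image _)
    obtain ⟨b, hb, rfl⟩ := Finset.mem_image.1 he
    refine ⟨b, hb, fun c hc => ?_⟩
    rw [hsB]
    exact h1 _ (Finset.mem_image_of_mem _ hc)
  refine ⟨⟨⟨P, hPcard⟩, ⟨fun b => q (s b), hp⟩⟩, ?_⟩
  apply Subtype.ext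
  apply Hyperforest.ext'
  change Finset.univ.image (fun b => insert (q (s b)) (HB P b)) = T.edges
  have hE : ∀ b, insert (q (s b)) (HB P b) = (s b).1 := by
    intro b
    rw [hsB, Finset.insert_erase (hq _)]
  ext e
  simp only [hE, Finset.mem_image, Finset.mem_univ, true_and]
  constructor
  · rintro ⟨b, rfl⟩; exact (s b).2
  · intro he
    refine ⟨⟨g ⟨e, he⟩, by rw [hPparts]; simp⟩, ?_⟩
    have := hginj (hs ⟨g ⟨e, he⟩, by rw [hPparts]; simp⟩)
    rw [this]

/-- Husimi's theorem: the number of hypertrees with `k` hyperedges on `n`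
labelled vertices equals `n^{k-1} S_2(n-1,k)`, where the Stirling number of the
second kind `S_2(n-1,k)` is the number of partitions of an `(n-1)`-element set
into `k` nonempty blocks. -/
theorem stmt16 (n k : ℕ) (hn : 2 ≤ n) (hk1 : 1 ≤ k) (hk2 : k ≤ n - 1) :
    Nat.card {T : Hyperforest (Fin n) // HFConnected T ∧ T.edges.card = k} =
      n ^ (k - 1) *
        Nat.card {P : Finpartition (Finset.univ : Finset (Fin (n - 1))) //
          P.parts.card = k} := by
  obtain ⟨m, rfl⟩ : ∃ m, n = m + 1 := ⟨n - 1, by omega⟩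
  rw [← Nat.card_congr (Equiv.ofBijective (hmap m k) ⟨hmap_inj m k, hmap_surj m k⟩), Nat.card_sigma]
  rw [Finset.sum_congr rfl (fun P _ => HB_count P.1 k hk1 P.2)]
  rw [Finset.sum_const, smul_eq_mul, mul_comm, Finset.card_univ, Nat.card_eq_fintype_card]
end
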